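/- arXiv:1801.04501 — 3 statements merged into one kernel-verified Lean document; each statement's English description precedes it below -/
import Mathlib

section
/- Under the log-moment condition, for every λ ≥ 0 the identity ∫_0^λ φ(z)/ω(z) dz = (2/σ²) ∫_0^∞ (1 − e^{−λz}) (e^{−Kz}/z) ( δ + ∫_0^z e^{Ku} μ̄(u) du ) dz holds, and both sides are finite. -/
open MeasureTheory Set

/-!
Write `ν = δ ε₀ + μ̄(u) du`, where `ε₀` is the unit mass at `0`. By the layer cake formula
`φ(z) = z ∫ e^{-zu} ν(du)`, so `φ(z) / ω(z)` is `2 / σ²` times the Laplace transform of `ν` divided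
by `z + K`. As `1 / (z + K)` is the Laplace transform of `e^{-Kt}` on `t ≥ 0`, this quotient is the
Laplace transform of the convolution of `ν` with that exponential, whose density is
`e^{-Kx} (δ + ∫_0^x e^{Ku} μ̄(u) du)`. Integrating `e^{-zx}` over `0 < z ≤ λ` turns it into
`(1 - e^{-λx}) / x`. All of this is Tonelli's theorem; the two sides are finite because the
log-moment condition makes `1 / (1 + u)` integrable with respect to `ν`.
-/

open scoped ENNReal

section ExponentialIntegrals

lemma mul_integral_exp_neg_mul (a b : ℝ) :
    a * ∫ t in (0 : ℝ)..b, Real.exp (-(t * a)) = 1 - Real.exp (-(b * a)) := by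
  rw [intervalIntegral.mul_integral_comp_mul_right (f := fun x ↦ Real.exp (-x)),
    intervalIntegral.integral_comp_neg Real.exp, integral_exp]
  simp

lemma lintegral_Ioc_exp_neg_mul {b : ℝ} (hb : 0 ≤ b) (x : ℝ) :
    ∫⁻ z in Ioc 0 b, ENNReal.ofReal (Real.exp (-(z * x))) =
      ENNReal.ofReal (∫ z in (0 : ℝ)..b, Real.exp (-(z * x))) := by
  have hcont : Continuous fun z ↦ Real.exp (-(z * x)) := by fun_prop
  rw [intervalIntegral.integral_of_le hb, ofReal_integral_eq_lintegral_ofReal hcont.integrableOn_Ioc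
    (ae_of_all _ fun _ ↦ (Real.exp_pos _).le)]

lemma lintegral_Ioc_exp_neg_mul_of_ne_zero {b x : ℝ} (hb : 0 ≤ b) (hx : x ≠ 0) :
    ∫⁻ z in Ioc 0 b, ENNReal.ofReal (Real.exp (-(z * x))) =
      ENNReal.ofReal ((1 - Real.exp (-(b * x))) / x) := by
  rw [lintegral_Ioc_exp_neg_mul hb, ← mul_integral_exp_neg_mul, mul_div_cancel_left₀ _ hx]

lemma lintegral_Ioc_exp_neg_mul_le {b x : ℝ} (hb : 0 ≤ b) (hx : 0 ≤ x) :
    ∫⁻ z in Ioc 0 b, ENNReal.ofReal (Real.exp (-(z * x))) ≤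
      ENNReal.ofReal ((b + 1) / (1 + x)) := by
  rw [lintegral_Ioc_exp_neg_mul hb]
  have hle : ∫ z in (0 : ℝ)..b, Real.exp (-(z * x)) ≤ b := by
    calc ∫ z in (0 : ℝ)..b, Real.exp (-(z * x)) ≤ ∫ _ in (0 : ℝ)..b, (1 : ℝ) :=
          intervalIntegral.integral_mono_on hb (Continuous.intervalIntegrable (by fun_prop) _ _)
            intervalIntegrable_const fun z hz ↦ by
              simpa using mul_nonneg hz.1 hx
      _ = b := by simp
  gcongr
  rw [le_div_iff₀' (by positivity), one_add_mul, mul_integral_exp_neg_mul]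
  linarith [Real.exp_pos (-(b * x))]

lemma ae_one_sub_exp_div_nonneg {b : ℝ} (hb : 0 ≤ b) :
    0 ≤ᵐ[volume.restrict (Ioi 0)] fun x ↦ (1 - Real.exp (-(b * x))) / x :=
  ae_restrict_of_forall_mem measurableSet_Ioi fun x (hx : 0 < x) ↦
    div_nonneg (by simpa using mul_nonneg hb hx.le) hx.le

lemma ae_one_div_add_nonneg {K : ℝ} (hK : 0 ≤ K) (b : ℝ) :
    0 ≤ᵐ[volume.restrict (Ioc 0 b)] fun z ↦ 1 / (z + K) :=
  ae_restrict_of_forall_mem measurableSet_Ioc fun _ hz ↦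
    one_div_nonneg.2 (add_nonneg hz.1.le hK)

lemma lintegral_Ici_exp_neg_mul {a : ℝ} (ha : 0 < a) :
    ∫⁻ t in Ici (0 : ℝ), ENNReal.ofReal (Real.exp (-(a * t))) = ENNReal.ofReal (1 / a) := by
  have hint := integrableOn_exp_mul_Ioi (neg_lt_zero.2 ha) 0
  have hval := integral_exp_mul_Ioi (neg_lt_zero.2 ha) 0
  simp only [neg_mul, mul_zero, Real.exp_zero, neg_div_neg_eq] at hint hval
  rw [setLIntegral_congr Ioi_ae_eq_Ici.symm, ← hval,
    ofReal_integral_eq_lintegral_ofReal hint (ae_of_all _ fun _ ↦ (Real.exp_pos _).le)]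

lemma exp_neg_mul_le_div_one_add {z u : ℝ} (hz : 0 < z) (hu : 0 ≤ u) :
    Real.exp (-(z * u)) ≤ (1 + 1 / z) / (1 + u) := by
  rw [Real.exp_neg, inv_eq_one_div, div_le_div_iff₀ (Real.exp_pos _) (by positivity), one_mul]
  calc 1 + u ≤ 1 + u + (z * u + 1 / z) := le_add_of_nonneg_right (by positivity)
    _ = (1 + 1 / z) * (z * u + 1) := by field_simp; ring
    _ ≤ (1 + 1 / z) * Real.exp (z * u) := by gcongr; exact Real.add_one_le_exp _

end ExponentialIntegrals

section Laplace

/-- The Laplace transform `∫ e^{-zu} ν(du)` of a measure on the line, with values in `[0, ∞]`. -/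
noncomputable def laplace (ν : Measure ℝ) (z : ℝ) : ℝ≥0∞ :=
  ∫⁻ u, ENNReal.ofReal (Real.exp (-(z * u))) ∂ν

/-- The exponential kernel `t ↦ e^{-Kt}` on `t ≥ 0`, extended by zero. -/
noncomputable def expKernel (K : ℝ) : ℝ → ℝ≥0∞ :=
  (Ici 0).indicator fun t ↦ ENNReal.ofReal (Real.exp (-(K * t)))

/-- The Lebesgue density `x ↦ ∫ k(x - u) ν(du)` of the convolution of `ν` with `k(t) dt`. -/
noncomputable def convDensity (ν : Measure ℝ) (k : ℝ → ℝ≥0∞) (x : ℝ) : ℝ≥0∞ :=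
  ∫⁻ u, k (x - u) ∂ν

@[fun_prop]
lemma measurable_expKernel (K : ℝ) : Measurable (expKernel K) :=
  Measurable.indicator (by fun_prop) measurableSet_Ici

lemma lintegral_exp_mul_expKernel {z K : ℝ} (h : 0 < z + K) :
    ∫⁻ t, ENNReal.ofReal (Real.exp (-(z * t))) * expKernel K t = ENNReal.ofReal (1 / (z + K)) := by
  rw [← lintegral_Ici_exp_neg_mul h, ← lintegral_indicator measurableSet_Ici]
  refine lintegral_congr fun t ↦ ?_
  rw [expKernel, ← indicator_mul_right (Ici 0) fun t ↦ ENNReal.ofReal (Real.exp (-(z * t)))]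
  simp only [← ENNReal.ofReal_mul (Real.exp_pos _).le, ← Real.exp_add, ← neg_add, ← add_mul]

variable (ν : Measure ℝ) [SFinite ν]

@[fun_prop]
lemma measurable_laplace : Measurable (laplace ν) :=
  Measurable.lintegral_prod_right (f := fun z u ↦ ENNReal.ofReal (Real.exp (-(z * u))))
    (by simp only [Function.uncurry_def]; fun_prop)

@[fun_prop]
lemma measurable_convDensity {k : ℝ → ℝ≥0∞} (hk : Measurable k) : Measurable (convDensity ν k) :=
  Measurable.lintegral_prod_right (f := fun x u ↦ k (x - u))
    (by simp only [Function.uncurry_def]; fun_prop)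

lemma lintegral_exp_mul_convDensity {k : ℝ → ℝ≥0∞} (hk : Measurable k) (z : ℝ) :
    ∫⁻ x, ENNReal.ofReal (Real.exp (-(z * x))) * convDensity ν k x =
      (∫⁻ t, ENNReal.ofReal (Real.exp (-(z * t))) * k t) * laplace ν z := by
  calc ∫⁻ x, ENNReal.ofReal (Real.exp (-(z * x))) * convDensity ν k x
      = ∫⁻ x, ∫⁻ u, ENNReal.ofReal (Real.exp (-(z * x))) * k (x - u) ∂ν := by
        simp only [convDensity, lintegral_const_mul' _ _ ENNReal.ofReal_ne_top]
    _ = ∫⁻ u, (∫⁻ x, ENNReal.ofReal (Real.exp (-(z * x))) * k (x - u)) ∂ν :=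
        lintegral_lintegral_swap (by simp only [Function.uncurry_def]; fun_prop)
    _ = ∫⁻ u, (∫⁻ t, ENNReal.ofReal (Real.exp (-(z * (t + u)))) * k t) ∂ν := by
        refine lintegral_congr fun u ↦ ?_
        simpa only [sub_add_cancel] using lintegral_sub_right_eq_self
          (fun t ↦ ENNReal.ofReal (Real.exp (-(z * (t + u)))) * k t) u
    _ = ∫⁻ u, (∫⁻ t, ENNReal.ofReal (Real.exp (-(z * t))) * k t) *
          ENNReal.ofReal (Real.exp (-(z * u))) ∂ν := by
        refine lintegral_congr fun u ↦ ?_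
        rw [← lintegral_mul_const' _ _ ENNReal.ofReal_ne_top]
        refine lintegral_congr fun t ↦ ?_
        rw [mul_add, neg_add, Real.exp_add, ENNReal.ofReal_mul (Real.exp_pos _).le, mul_right_comm]
    _ = (∫⁻ t, ENNReal.ofReal (Real.exp (-(z * t))) * k t) * laplace ν z :=
        lintegral_const_mul _ (by fun_prop)

lemma lintegral_Ioc_div_add_mul_laplace {K b : ℝ} (hK : 0 ≤ K) (hb : 0 ≤ b) :
    ∫⁻ z in Ioc 0 b, ENNReal.ofReal (1 / (z + K)) * laplace ν z =
      ∫⁻ x, ENNReal.ofReal ((1 - Real.exp (-(b * x))) / x) * convDensity ν (expKernel K) x := by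
  calc ∫⁻ z in Ioc 0 b, ENNReal.ofReal (1 / (z + K)) * laplace ν z
      = ∫⁻ z in Ioc 0 b, ∫⁻ x,
          ENNReal.ofReal (Real.exp (-(z * x))) * convDensity ν (expKernel K) x := by
        refine setLIntegral_congr_fun measurableSet_Ioc fun z hz ↦ ?_
        rw [lintegral_exp_mul_convDensity ν (measurable_expKernel K),
          lintegral_exp_mul_expKernel (add_pos_of_pos_of_nonneg hz.1 hK)]
    _ = ∫⁻ x, ∫⁻ z in Ioc 0 b,
          ENNReal.ofReal (Real.exp (-(z * x))) * convDensity ν (expKernel K) x :=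
        lintegral_lintegral_swap (by simp only [Function.uncurry_def]; fun_prop)
    _ = ∫⁻ x, ENNReal.ofReal ((1 - Real.exp (-(b * x))) / x) * convDensity ν (expKernel K) x := by
        refine lintegral_congr_ae ?_
        filter_upwards [Measure.ae_ne volume 0] with x hx
        rw [lintegral_mul_const _ (by fun_prop), lintegral_Ioc_exp_neg_mul_of_ne_zero hb hx]

end Laplace

section WeightedIntegrals

variable {α : Type*} [MeasurableSpace α] {μ : Measure α} {w : α → ℝ} {f : α → ℝ≥0∞}

lemma mul_toReal_ae_eq (hw : 0 ≤ᵐ[μ] w) :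
    (fun x ↦ (ENNReal.ofReal (w x) * f x).toReal) =ᵐ[μ] fun x ↦ w x * (f x).toReal := by
  filter_upwards [hw] with x hx
  rw [ENNReal.toReal_mul, ENNReal.toReal_ofReal hx]

lemma integrable_mul_toReal (hw : 0 ≤ᵐ[μ] w) (hwm : AEMeasurable w μ) (hf : AEMeasurable f μ)
    (hfin : ∫⁻ x, ENNReal.ofReal (w x) * f x ∂μ ≠ ∞) :
    Integrable (fun x ↦ w x * (f x).toReal) μ :=
  (integrable_toReal_of_lintegral_ne_top (by fun_prop) hfin).congr (mul_toReal_ae_eq hw)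

lemma integral_mul_toReal (hw : 0 ≤ᵐ[μ] w) (hwm : AEMeasurable w μ) (hf : AEMeasurable f μ)
    (hfin : ∫⁻ x, ENNReal.ofReal (w x) * f x ∂μ ≠ ∞) :
    ∫ x, w x * (f x).toReal ∂μ = (∫⁻ x, ENNReal.ofReal (w x) * f x ∂μ).toReal := by
  rw [← integral_congr_ae (mul_toReal_ae_eq hw),
    integral_toReal (by fun_prop) (ae_lt_top' (by fun_prop) hfin)]

end WeightedIntegrals

section HalfLine

variable {ν : Measure ℝ}

lemma lintegral_ne_top_of_le_div_one_add {f : ℝ → ℝ≥0∞} {C : ℝ} (hC : 0 ≤ C)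
    (hf : ∀ᵐ u ∂ν, f u ≤ ENNReal.ofReal (C / (1 + u)))
    (hfin : ∫⁻ u, ENNReal.ofReal (1 / (1 + u)) ∂ν ≠ ∞) : ∫⁻ u, f u ∂ν ≠ ∞ := by
  refine ne_top_of_le_ne_top (ENNReal.mul_ne_top (ENNReal.ofReal_ne_top (r := C)) hfin) ?_
  rw [← lintegral_const_mul' _ _ ENNReal.ofReal_ne_top]
  simpa only [← ENNReal.ofReal_mul hC, mul_one_div] using lintegral_mono_ae hf

lemma convDensity_expKernel_of_neg (hpos : ∀ᵐ u ∂ν, 0 ≤ u) (K : ℝ) {x : ℝ} (hx : x < 0) :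
    convDensity ν (expKernel K) x = 0 := by
  refine lintegral_eq_zero_of_ae_eq_zero ?_
  filter_upwards [hpos] with u hu
  exact indicator_of_notMem (by simpa using hx.trans_le hu) _

lemma lintegral_Ioi_mul_convDensity_expKernel [SFinite ν] (hpos : ∀ᵐ u ∂ν, 0 ≤ u) {K b : ℝ}
    (hK : 0 ≤ K) (hb : 0 ≤ b) :
    ∫⁻ x in Ioi 0, ENNReal.ofReal ((1 - Real.exp (-(b * x))) / x) *
      convDensity ν (expKernel K) x =
    ∫⁻ z in Ioc 0 b, ENNReal.ofReal (1 / (z + K)) * laplace ν z := by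
  rw [lintegral_Ioc_div_add_mul_laplace ν hK hb]
  refine setLIntegral_eq_of_support_subset (Function.support_subset_iff'.2 fun x hx ↦ ?_)
  obtain hneg | rfl := (notMem_Ioi.1 hx).lt_or_eq
  · rw [convDensity_expKernel_of_neg hpos K hneg, mul_zero]
  -- at `x = 0` the weight is `0 / 0 = 0`
  · simp

/-- A measure on `[0, ∞)` that integrates `1 / (1 + u)`, as the representing measures of Stieltjes
functions do. This is exactly what makes the Laplace transform integrable at `0`. -/
structure IsStieltjesMeasure (ν : Measure ℝ) : Prop where
  ae_nonneg : ∀ᵐ u ∂ν, 0 ≤ u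
  lintegral_ne_top : ∫⁻ u, ENNReal.ofReal (1 / (1 + u)) ∂ν ≠ ∞

namespace IsStieltjesMeasure

lemma laplace_ne_top (hν : IsStieltjesMeasure ν) {z : ℝ} (hz : 0 < z) : laplace ν z ≠ ∞ := by
  refine lintegral_ne_top_of_le_div_one_add (C := 1 + 1 / z) (by positivity) ?_ hν.lintegral_ne_top
  filter_upwards [hν.ae_nonneg] with u hu
  exact ENNReal.ofReal_le_ofReal (exp_neg_mul_le_div_one_add hz hu)

lemma convDensity_expKernel_ne_top (hν : IsStieltjesMeasure ν) {K x : ℝ} (hK : 0 ≤ K) (hx : 0 ≤ x) :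
    convDensity ν (expKernel K) x ≠ ∞ := by
  refine lintegral_ne_top_of_le_div_one_add (C := 1 + x) (by positivity) ?_ hν.lintegral_ne_top
  filter_upwards [hν.ae_nonneg] with u hu
  refine indicator_apply_le' (fun (hux : 0 ≤ x - u) ↦ ENNReal.ofReal_le_ofReal ?_) fun _ ↦ zero_le
  calc Real.exp (-(K * (x - u))) ≤ 1 := by simpa using mul_nonneg hK hux
    _ ≤ (1 + x) / (1 + u) := by rw [one_le_div (by positivity)]; linarith

variable [SFinite ν] {K b : ℝ}

lemma lintegral_Ioc_laplace_ne_top (hν : IsStieltjesMeasure ν) (hb : 0 ≤ b) :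
    ∫⁻ z in Ioc 0 b, laplace ν z ≠ ∞ := by
  simp only [laplace]
  rw [lintegral_lintegral_swap (by simp only [Function.uncurry_def]; fun_prop)]
  refine lintegral_ne_top_of_le_div_one_add (C := b + 1) (by positivity) ?_ hν.lintegral_ne_top
  filter_upwards [hν.ae_nonneg] with u hu using lintegral_Ioc_exp_neg_mul_le hb hu

lemma lintegral_Ioc_div_add_mul_laplace_ne_top (hν : IsStieltjesMeasure ν)
    (hK : 0 < K) (hb : 0 ≤ b) :
    ∫⁻ z in Ioc 0 b, ENNReal.ofReal (1 / (z + K)) * laplace ν z ≠ ∞ := by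
  refine ne_top_of_le_ne_top (ENNReal.mul_ne_top (ENNReal.ofReal_ne_top (r := 1 / K))
    (hν.lintegral_Ioc_laplace_ne_top hb)) ?_
  rw [← lintegral_const_mul' _ _ ENNReal.ofReal_ne_top]
  refine setLIntegral_mono' measurableSet_Ioc fun z hz ↦ ?_
  gcongr
  linarith [hz.1]

lemma lintegral_Ioi_mul_convDensity_expKernel_ne_top (hν : IsStieltjesMeasure ν)
    (hK : 0 < K) (hb : 0 ≤ b) :
    ∫⁻ x in Ioi 0, ENNReal.ofReal ((1 - Real.exp (-(b * x))) / x) *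
      convDensity ν (expKernel K) x ≠ ∞ := by
  rw [lintegral_Ioi_mul_convDensity_expKernel hν.ae_nonneg hK.le hb]
  exact hν.lintegral_Ioc_div_add_mul_laplace_ne_top hK hb

lemma integrableOn_div_add_mul_laplace (hν : IsStieltjesMeasure ν)
    (hK : 0 < K) (hb : 0 ≤ b) :
    IntegrableOn (fun z ↦ 1 / (z + K) * (laplace ν z).toReal) (Ioc 0 b) :=
  integrable_mul_toReal (ae_one_div_add_nonneg hK.le b) (by fun_prop) (by fun_prop)
    (hν.lintegral_Ioc_div_add_mul_laplace_ne_top hK hb)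

lemma integrableOn_mul_convDensity_expKernel (hν : IsStieltjesMeasure ν)
    (hK : 0 < K) (hb : 0 ≤ b) :
    IntegrableOn (fun x ↦ (1 - Real.exp (-(b * x))) / x * (convDensity ν (expKernel K) x).toReal)
      (Ioi 0) :=
  integrable_mul_toReal (ae_one_sub_exp_div_nonneg hb) (by fun_prop) (by fun_prop)
    (hν.lintegral_Ioi_mul_convDensity_expKernel_ne_top hK hb)

lemma integral_Ioc_div_add_mul_laplace (hν : IsStieltjesMeasure ν)
    (hK : 0 < K) (hb : 0 ≤ b) :
    ∫ z in Ioc 0 b, 1 / (z + K) * (laplace ν z).toReal =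
      ∫ x in Ioi 0, (1 - Real.exp (-(b * x))) / x * (convDensity ν (expKernel K) x).toReal := by
  rw [integral_mul_toReal (ae_one_div_add_nonneg hK.le b) (by fun_prop) (by fun_prop)
      (hν.lintegral_Ioc_div_add_mul_laplace_ne_top hK hb),
    integral_mul_toReal (ae_one_sub_exp_div_nonneg hb) (by fun_prop) (by fun_prop)
      (hν.lintegral_Ioi_mul_convDensity_expKernel_ne_top hK hb),
    lintegral_Ioi_mul_convDensity_expKernel hν.ae_nonneg hK.le hb]

end IsStieltjesMeasure

end HalfLine

section TailMeasure

/-- The measure `δ ε₀ + μ((u, ∞)) du` on `[0, ∞)`, where `ε₀` is the unit mass at `0`. The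
Bernstein function with drift `δ` and Lévy measure `μ` is `z` times its Laplace transform. -/
noncomputable def tailMeasure (μ : Measure ℝ) (δ : ℝ≥0∞) : Measure ℝ :=
  δ • Measure.dirac 0 + (volume.restrict (Ioi 0)).withDensity fun u ↦ μ (Ioi u)

variable (μ : Measure ℝ)

lemma measurable_measure_Ioi : Measurable fun u : ℝ ↦ μ (Ioi u) :=
  Antitone.measurable fun _ _ h ↦ measure_mono (Ioi_subset_Ioi h)

instance (δ : ℝ≥0∞) : SFinite (tailMeasure μ δ) := by
  unfold tailMeasure; infer_instance

lemma lintegral_tailMeasure (δ : ℝ≥0∞) {f : ℝ → ℝ≥0∞} (hf : Measurable f) :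
    ∫⁻ u, f u ∂tailMeasure μ δ = δ * f 0 + ∫⁻ u in Ioi 0, μ (Ioi u) * f u := by
  rw [tailMeasure, lintegral_add_measure, lintegral_smul_measure, lintegral_dirac' _ hf,
    lintegral_withDensity_eq_lintegral_mul _ (measurable_measure_Ioi μ) hf]
  rfl

lemma ae_tailMeasure_nonneg (δ : ℝ≥0∞) : ∀ᵐ u ∂tailMeasure μ δ, 0 ≤ u := by
  have hs : MeasurableSet {u : ℝ | 0 ≤ u}ᶜ := measurableSet_Ici.compl
  rw [ae_iff, ← compl_ofPred, ← lintegral_indicator_one hs,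
    lintegral_tailMeasure μ δ (measurable_one.indicator hs), indicator_of_notMem (by simp),
    mul_zero, zero_add]
  refine setLIntegral_eq_zero measurableSet_Ioi fun u hu ↦ ?_
  simp [le_of_lt (mem_Ioi.1 hu)]

lemma lintegral_Ioi_measure_Ioi_mul {g : ℝ → ℝ}
    (hg : ∀ t > 0, IntervalIntegrable g volume 0 t) (hg0 : ∀ t > 0, 0 ≤ g t) :
    ∫⁻ t in Ioi 0, μ (Ioi t) * ENNReal.ofReal (g t) =
      ∫⁻ u in Ioi 0, ENNReal.ofReal (∫ t in (0 : ℝ)..u, g t) ∂μ := by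
  rw [lintegral_comp_eq_lintegral_meas_lt_mul (μ.restrict (Ioi 0))
    (ae_restrict_of_forall_mem measurableSet_Ioi fun u hu ↦ le_of_lt hu) aemeasurable_id' hg
    (ae_restrict_of_forall_mem measurableSet_Ioi hg0)]
  refine setLIntegral_congr_fun measurableSet_Ioi fun t (ht : 0 < t) ↦ ?_
  rw [show {u : ℝ | t < u} = Ioi t from rfl,
    Measure.restrict_eq_self μ (Ioi_subset_Ioi ht.le)]

lemma lintegral_log_one_add_ne_top
    (hmin : ∫⁻ u in Ioi (0 : ℝ), ENNReal.ofReal (min 1 u) ∂μ ≠ ∞)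
    (hlog : ∫⁻ u in Ioi (1 : ℝ), ENNReal.ofReal (Real.log u) ∂μ ≠ ∞) :
    ∫⁻ u in Ioi (0 : ℝ), ENNReal.ofReal (Real.log (1 + u)) ∂μ ≠ ∞ := by
  have hsmall : ∀ u ∈ Ioc (0 : ℝ) 1, Real.log (1 + u) ≤ min 1 u := fun u hu ↦ by
    rw [min_eq_right hu.2]
    linarith [Real.log_le_sub_one_of_pos (by linarith [hu.1] : 0 < 1 + u)]
  have hlarge : ∀ u ∈ Ioi (1 : ℝ), Real.log (1 + u) ≤ min 1 u + Real.log u := fun u hu ↦ by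
    have hu : 1 < u := hu
    calc Real.log (1 + u) ≤ Real.log (2 * u) := by gcongr; linarith
      _ = Real.log 2 + Real.log u := Real.log_mul two_ne_zero (by positivity)
      _ ≤ min 1 u + Real.log u := by
        rw [min_eq_left hu.le]
        linarith [Real.log_two_lt_d9]
  refine ne_top_of_le_ne_top (ENNReal.add_ne_top.2 ⟨hmin, ENNReal.add_ne_top.2 ⟨hmin, hlog⟩⟩) ?_
  rw [← Ioc_union_Ioi_eq_Ioi zero_le_one]
  refine (lintegral_union_le _ _ _).trans (add_le_add ?_ ?_)
  · exact (setLIntegral_mono' measurableSet_Ioc fun u hu ↦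
      ENNReal.ofReal_le_ofReal (hsmall u hu)).trans
      (lintegral_mono_set subset_union_left)
  · calc ∫⁻ u in Ioi 1, ENNReal.ofReal (Real.log (1 + u)) ∂μ
        ≤ ∫⁻ u in Ioi 1, (ENNReal.ofReal (min 1 u) + ENNReal.ofReal (Real.log u)) ∂μ :=
          setLIntegral_mono' measurableSet_Ioi fun u hu ↦
            (ENNReal.ofReal_le_ofReal (hlarge u hu)).trans ENNReal.ofReal_add_le
      _ = ∫⁻ u in Ioi 1, ENNReal.ofReal (min 1 u) ∂μ +
            ∫⁻ u in Ioi 1, ENNReal.ofReal (Real.log u) ∂μ := lintegral_add_left (by fun_prop) _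
      _ ≤ _ := by gcongr; exact subset_union_right

lemma isStieltjesMeasure_tailMeasure {δ : ℝ≥0∞} (hδ : δ ≠ ∞)
    (hmin : ∫⁻ u in Ioi (0 : ℝ), ENNReal.ofReal (min 1 u) ∂μ ≠ ∞)
    (hlog : ∫⁻ u in Ioi (1 : ℝ), ENNReal.ofReal (Real.log u) ∂μ ≠ ∞) :
    IsStieltjesMeasure (tailMeasure μ δ) := by
  refine ⟨ae_tailMeasure_nonneg μ δ, ?_⟩
  have hprim : ∀ u > 0, ∫ t in (0 : ℝ)..u, 1 / (1 + t) = Real.log (1 + u) := fun u hu ↦ by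
    simp only [one_div]
    rw [intervalIntegral.integral_comp_add_left (fun x ↦ x⁻¹), add_zero,
      integral_inv_of_pos one_pos (by positivity), div_one]
  have hint : ∀ u > 0, IntervalIntegrable (fun t : ℝ ↦ 1 / (1 + t)) volume 0 u := fun u hu ↦ by
    refine ContinuousOn.intervalIntegrable fun t ht ↦ ContinuousAt.continuousWithinAt ?_
    rw [uIcc_of_le (le_of_lt hu)] at ht
    exact continuousAt_const.div (by fun_prop) (by linarith [ht.1])
  rw [lintegral_tailMeasure μ δ (by fun_prop),
    lintegral_Ioi_measure_Ioi_mul μ hint fun t ht ↦ by positivity,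
    setLIntegral_congr_fun measurableSet_Ioi fun u hu ↦ congrArg ENNReal.ofReal (hprim u hu)]
  exact ENNReal.add_ne_top.2
    ⟨ENNReal.mul_ne_top hδ ENNReal.ofReal_ne_top, lintegral_log_one_add_ne_top μ hmin hlog⟩

lemma ofReal_mul_laplace_tailMeasure (δ : ℝ≥0∞) {z : ℝ} (hz : 0 ≤ z) :
    ENNReal.ofReal z * laplace (tailMeasure μ δ) z =
      δ * ENNReal.ofReal z + ∫⁻ u in Ioi 0, ENNReal.ofReal (1 - Real.exp (-(z * u))) ∂μ := by
  have hprim : ∀ u : ℝ, ∫ t in (0 : ℝ)..u, z * Real.exp (-(z * t)) = 1 - Real.exp (-(z * u)) :=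
    fun u ↦ by
      simpa only [intervalIntegral.integral_const_mul, mul_comm _ z, mul_comm u z] using
        mul_integral_exp_neg_mul z u
  have hint : ∀ u : ℝ, IntervalIntegrable (fun t ↦ z * Real.exp (-(z * t))) volume 0 u :=
    fun u ↦ Continuous.intervalIntegrable (by fun_prop) _ _
  simp only [← hprim]
  rw [← lintegral_Ioi_measure_Ioi_mul μ (fun u _ ↦ hint u) (fun t _ ↦ by positivity), laplace,
    lintegral_tailMeasure μ δ (by fun_prop), mul_add,
    ← lintegral_const_mul' _ _ ENNReal.ofReal_ne_top]
  simp [ENNReal.ofReal_mul hz, mul_comm, mul_assoc]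

lemma mul_laplace_tailMeasure_toReal {δ z : ℝ} (hδ : 0 ≤ δ) (hz : 0 ≤ z)
    (hfin : laplace (tailMeasure μ (ENNReal.ofReal δ)) z ≠ ∞) :
    z * (laplace (tailMeasure μ (ENNReal.ofReal δ)) z).toReal =
      δ * z + ∫ u in Ioi 0, (1 - Real.exp (-(z * u))) ∂μ := by
  have hsplit := ofReal_mul_laplace_tailMeasure μ (ENNReal.ofReal δ) hz
  have hne := hsplit ▸ ENNReal.mul_ne_top ENNReal.ofReal_ne_top hfin
  have hreal := congrArg ENNReal.toReal hsplit
  rw [ENNReal.toReal_add (ENNReal.add_ne_top.1 hne).1 (ENNReal.add_ne_top.1 hne).2,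
    ENNReal.toReal_mul, ENNReal.toReal_mul, ENNReal.toReal_ofReal hz,
    ENNReal.toReal_ofReal hδ] at hreal
  rw [hreal, integral_eq_lintegral_of_nonneg_ae _ (Continuous.aestronglyMeasurable (by fun_prop))]
  refine ae_restrict_of_forall_mem measurableSet_Ioi fun u hu ↦ ?_
  simpa using mul_nonneg hz (le_of_lt hu)

lemma convDensity_tailMeasure_expKernel (δ : ℝ≥0∞) (K : ℝ) {x : ℝ} (hx : 0 ≤ x) :
    convDensity (tailMeasure μ δ) (expKernel K) x =
      ENNReal.ofReal (Real.exp (-(K * x))) *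
        (δ + ∫⁻ u in Ioc 0 x, ENNReal.ofReal (Real.exp (K * u)) * μ (Ioi u)) := by
  have hker : ∀ u, expKernel K (x - u) = (Iic x).indicator (fun u ↦
      ENNReal.ofReal (Real.exp (-(K * x))) * ENNReal.ofReal (Real.exp (K * u))) u := fun u ↦ by
    simp only [expKernel, indicator_apply, mem_Ici, mem_Iic, sub_nonneg,
      ← ENNReal.ofReal_mul (Real.exp_pos _).le, ← Real.exp_add]
    ring_nf
  rw [convDensity, lintegral_tailMeasure μ δ (by fun_prop)]
  simp only [hker, ← indicator_mul_right (Iic x) fun u ↦ μ (Ioi u)]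
  rw [setLIntegral_indicator measurableSet_Iic, inter_comm, Ioi_inter_Iic, mul_add,
    ← lintegral_const_mul' _ _ ENNReal.ofReal_ne_top, indicator_of_mem (mem_Iic.2 hx)]
  simp [mul_left_comm, mul_comm, mul_assoc]

lemma convDensity_tailMeasure_expKernel_toReal {δ K x : ℝ} (hδ : 0 ≤ δ) (hx : 0 ≤ x)
    (hfin : convDensity (tailMeasure μ (ENNReal.ofReal δ)) (expKernel K) x ≠ ∞) :
    (convDensity (tailMeasure μ (ENNReal.ofReal δ)) (expKernel K) x).toReal =
      Real.exp (-(K * x)) *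
        (δ + ∫ u in (0 : ℝ)..x, Real.exp (K * u) * (μ (Ioi u)).toReal) := by
  have hconv := convDensity_tailMeasure_expKernel μ (ENNReal.ofReal δ) K hx
  have hne : ∫⁻ u in Ioc 0 x, ENNReal.ofReal (Real.exp (K * u)) * μ (Ioi u) ≠ ∞ := fun htop ↦
    hfin (by rw [hconv, htop, add_top, ENNReal.mul_top (by simp [Real.exp_pos])])
  rw [hconv, ENNReal.toReal_mul, ENNReal.toReal_add ENNReal.ofReal_ne_top hne,
    ENNReal.toReal_ofReal (Real.exp_pos _).le, ENNReal.toReal_ofReal hδ,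
    intervalIntegral.integral_of_le hx, integral_mul_toReal
      (ae_of_all _ fun _ ↦ (Real.exp_pos _).le) (by fun_prop)
      (measurable_measure_Ioi μ).aemeasurable hne]

end TailMeasure

lemma mul_div_quadratic (c : ℝ) {σ z : ℝ} (hσ : σ ≠ 0) (hz : z ≠ 0) (L : ℝ) :
    z * L / (c * z + σ ^ 2 * z ^ 2 / 2) = 2 / σ ^ 2 * (1 / (z + 2 * c / σ ^ 2) * L) := by
  have hfactor : c * z + σ ^ 2 * z ^ 2 / 2 = z * (σ ^ 2 / 2 * (z + 2 * c / σ ^ 2)) := by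
    field_simp
    ring
  rw [hfactor, mul_div_mul_left _ _ hz, ← div_div]
  ring

/-- Under the log-moment condition, for every λ ≥ 0 the identity
∫_0^λ φ(z)/ω(z) dz = (2/σ²) ∫_0^∞ (1 − e^{−λz}) (e^{−Kz}/z)(δ + ∫_0^z e^{Ku} μ̄(u) du) dz
holds, and both sides are finite. -/
theorem stmt_0
    (μ : Measure ℝ) (δ c σ K : ℝ)
    (hμ0 : μ (Iic 0) = 0)
    (hμint : ∫⁻ u in Ioi (0:ℝ), ENNReal.ofReal (min 1 u) ∂μ < ⊤)
    (hδ : 0 ≤ δ) (hc : 0 < c) (hσ : 0 < σ)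
    (hlog : ∫⁻ u in Ioi (1:ℝ), ENNReal.ofReal (Real.log u) ∂μ < ⊤)
    (hK : K = 2 * c / σ ^ 2)
    (φ ω μbar : ℝ → ℝ)
    (hφ : ∀ z, φ z = δ * z + ∫ u in Ioi (0:ℝ), (1 - Real.exp (-(z * u))) ∂μ)
    (hω : ∀ z, ω z = c * z + σ ^ 2 * z ^ 2 / 2)
    (hμbar : ∀ x, μbar x = (μ (Ioi x)).toReal)
    (lam : ℝ) (hlam : 0 ≤ lam) :
    IntervalIntegrable (fun z => φ z / ω z) volume 0 lam ∧
    IntegrableOn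
      (fun z => (1 - Real.exp (-(lam * z))) * (Real.exp (-(K * z)) / z) *
        (δ + ∫ u in (0:ℝ)..z, Real.exp (K * u) * μbar u)) (Ioi 0) volume ∧
    (∫ z in (0:ℝ)..lam, φ z / ω z) =
      (2 / σ ^ 2) * ∫ z in Ioi (0:ℝ),
        (1 - Real.exp (-(lam * z))) * (Real.exp (-(K * z)) / z) *
          (δ + ∫ u in (0:ℝ)..z, Real.exp (K * u) * μbar u) := by
  have hKpos : 0 < K := by rw [hK]; positivity
  set ν := tailMeasure μ (ENNReal.ofReal δ)
  have hν : IsStieltjesMeasure ν :=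
    isStieltjesMeasure_tailMeasure μ ENNReal.ofReal_ne_top hμint.ne hlog.ne
  have hleft : EqOn (fun z ↦ φ z / ω z)
      (fun z ↦ 2 / σ ^ 2 * (1 / (z + K) * (laplace ν z).toReal)) (Ioc 0 lam) := fun z hz ↦ by
    simp only [hφ, hω, hK, ← mul_div_quadratic c hσ.ne' hz.1.ne', ν,
      mul_laplace_tailMeasure_toReal μ hδ hz.1.le (hν.laplace_ne_top hz.1)]
  have hright : EqOn (fun z ↦ (1 - Real.exp (-(lam * z))) * (Real.exp (-(K * z)) / z) *
        (δ + ∫ u in (0:ℝ)..z, Real.exp (K * u) * μbar u))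
      (fun z ↦ (1 - Real.exp (-(lam * z))) / z * (convDensity ν (expKernel K) z).toReal)
      (Ioi 0) := fun z hz ↦ by
    simp only [hμbar, ν, convDensity_tailMeasure_expKernel_toReal μ hδ (le_of_lt hz)
      (hν.convDensity_expKernel_ne_top hKpos.le (le_of_lt hz))]
    ring
  rw [intervalIntegrable_iff_integrableOn_Ioc_of_le hlam, intervalIntegral.integral_of_le hlam,
    integrableOn_congr_fun hleft measurableSet_Ioc, integrableOn_congr_fun hright measurableSet_Ioi,
    setIntegral_congr_fun measurableSet_Ioc hleft, setIntegral_congr_fun measurableSet_Ioi hright,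
    integral_const_mul, hν.integral_Ioc_div_add_mul_laplace hKpos hlam]
  exact ⟨(hν.integrableOn_div_add_mul_laplace hKpos hlam).const_mul _,
    hν.integrableOn_mul_convDensity_expKernel hKpos hlam, rfl⟩
end

section
/- For any λ > 0 there exists a unique non-negative C¹ function y_λ on (0,∞) satisfying the Riccati equation y′(z) = y(z)² − λ r(z)² for all z > 0 and y_λ(z) → 0 as z → ∞. Moreover y_λ is strictly positive on (0,∞); there exist 0 < z₁ ≤ z₂ < ∞ such that y_λ(z) ≤ √λ · r(z) for all z ∈ (0,z₁] ∪ [z₂,∞); y_λ is integrable on (0,1); and y_λ is decreasing on a neighborhood of 0 and on a neighborhood of ∞. -/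
open MeasureTheory Set

/-!
Solutions of the Riccati equation `y' = y ^ 2 - q` separate as `z` increases: the difference `d` of
two nonnegative ones satisfies `d' = (y₁ + y₂) d`. Hence at most one of them vanishes at infinity.
Where `q` decreases, a solution which exceeds the nullcline `y ^ 2 = q` increases and stays above
it. So a solution that tends to `0`, or has a zero further right, is below the nullcline, and by the
separation the solutions that vanish at `n` form a Cauchy sequence; its limit is `y_λ`. A solution
above the nullcline all the way down to `0` would be bounded there, which is impossible when `q`
blows up.

The coefficient is `q = λ r ^ 2` with `r = exp (-(m ∘ φ)) / √(ω ∘ φ)`, where `φ` is the increasing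
inverse of `I`. Since `(m + log ω / 2)' = (ψ + ω' / 2) / ω`, it decreases where `ψ ≥ -ω' / 2`: near
`0`, because `ψ` tends to `0` there whereas `ω' ≥ c`, and near infinity, because `ψ` is positive
there. Finally `r ≤ φ' / √(c φ)`, which has the primitive `2 √(φ / c)`, bounded near `0`.
-/

open Filter Topology NNReal

theorem exists_hasDerivWithinAt_Icc_of_lipschitzWith {E : Type*} [NormedAddCommGroup E]
    [NormedSpace ℝ E] [CompleteSpace E] {f : ℝ → E → E} {a b t₀ : ℝ} {K L : ℝ≥0}
    (hlip : ∀ t ∈ Icc a b, LipschitzWith K (f t))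
    (hcont : ∀ x, ContinuousOn (f · x) (Icc a b))
    (hbdd : ∀ t ∈ Icc a b, ∀ x, ‖f t x‖ ≤ L) (ht₀ : t₀ ∈ Icc a b) (x₀ : E) :
    ∃ y : ℝ → E, y t₀ = x₀ ∧
      ∀ t ∈ Icc a b, HasDerivWithinAt y (f t (y t)) (Icc a b) t := by
  have hab : 0 ≤ b - a := sub_nonneg.mpr (ht₀.1.trans ht₀.2)
  have hPL : IsPicardLindelof f (⟨t₀, ht₀⟩ : Icc a b) x₀ (L * .mk (b - a) hab) 0 L K :=
    { lipschitzOnWith := fun t ht ↦ (hlip t ht).lipschitzOnWith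
      continuousOn := fun x _ ↦ hcont x
      norm_le := fun t ht x _ ↦ hbdd t ht x
      mul_max_le := by
        rw [NNReal.coe_mul, NNReal.coe_mk, NNReal.coe_zero, sub_zero]
        exact mul_le_mul_of_nonneg_left
          (max_le (sub_le_sub_left ht₀.1 b) (sub_le_sub_right ht₀.2 a)) L.coe_nonneg }
  exact hPL.exists_eq_forall_mem_Icc_hasDerivWithinAt₀

theorem nonneg_of_deriv_nonpos_of_neg {y y' : ℝ → ℝ} {a b : ℝ}
    (hy : ∀ z ∈ Icc a b, HasDerivWithinAt y (y' z) (Icc a b) z) (hb : 0 ≤ y b)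
    (hneg : ∀ z ∈ Icc a b, y z < 0 → y' z ≤ 0) {w : ℝ} (hw : w ∈ Icc a b) : 0 ≤ y w := by
  by_contra! hyw
  have hwb : w < b := hw.2.lt_of_ne (by rintro rfl; exact hyw.not_ge hb)
  -- The line from `(w, y w)` to `(b, y w / 2)` is negative and rises, so `y` cannot cross it.
  set ε := -y w / 2 / (b - w)
  have hε_pos : 0 < ε := div_pos (half_pos (neg_pos.mpr hyw)) (sub_pos.mpr hwb)
  have hε_mul : ε * (b - w) = -y w / 2 := div_mul_cancel₀ _ (sub_pos.mpr hwb).ne'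
  have hsub : Icc w b ⊆ Icc a b := Icc_subset_Icc_left hw.1
  have hbarrier := image_le_of_deriv_right_lt_deriv_boundary'
    (f := y) (f' := y') (B := fun z ↦ y w + ε * (z - w)) (B' := fun _ ↦ ε)
    (fun z hz ↦ ((hy z (hsub hz)).mono hsub).continuousWithinAt)
    (fun z hz ↦ (hy z (hsub ⟨hz.1, hz.2.le⟩)).mono_of_mem_nhdsWithin
      (Icc_mem_nhdsGE_of_mem ⟨hw.1.trans hz.1, hz.2⟩))
    (by simp) (by fun_prop)
    (fun z _ ↦ by
      simpa using (((hasDerivAt_id z).sub_const w).const_mul ε).const_add (y w)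
        |>.hasDerivWithinAt)
    (fun z hz hyz ↦ (hneg z (hsub ⟨hz.1, hz.2.le⟩) (by nlinarith [hz.2])).trans_lt hε_pos)
    (right_mem_Icc.mpr hwb.le)
  linarith

theorem sub_le_mul_sub_of_neg_le_deriv {y y' : ℝ → ℝ} {a b C : ℝ}
    (hy : ∀ z ∈ Icc a b, HasDerivWithinAt y (y' z) (Icc a b) z)
    (hC : ∀ z ∈ Icc a b, -C ≤ y' z) {w : ℝ} (hw : w ∈ Icc a b) :
    y w - y b ≤ C * (b - w) := by
  have hmono : MonotoneOn (fun z ↦ y z + C * z) (Icc a b) := by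
    have hderiv : ∀ z ∈ Icc a b,
        HasDerivWithinAt (fun z ↦ y z + C * z) (y' z + C) (Icc a b) z := fun z hz ↦
      (hy z hz).add (((hasDerivWithinAt_id z _).const_mul C).congr_deriv (mul_one C))
    refine monotoneOn_of_hasDerivWithinAt_nonneg (convex_Icc a b)
      (fun z hz ↦ (hderiv z hz).continuousWithinAt)
      (fun z hz ↦ (hderiv z (interior_subset hz)).mono interior_subset) fun z hz ↦ ?_
    linarith [hC z (interior_subset hz)]
  have := hmono hw (right_mem_Icc.mpr (hw.1.trans hw.2)) hw.2
  dsimp only at this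
  linarith

theorem exists_tendstoUniformlyOn_of_dist_le {α E : Type*} [MetricSpace E] [CompleteSpace E]
    [Nonempty E] {Y : ℕ → α → E} {s : ℕ → Set α} {ε : ℕ → ℝ} (hs : Monotone s)
    (hε : Tendsto ε atTop (𝓝 0))
    (hY : ∀ n k, n ≤ k → ∀ x ∈ s n, dist (Y k x) (Y n x) ≤ ε n) :
    ∃ y : α → E, ∀ n, TendstoUniformlyOn Y y atTop (s n) := by
  have hcauchy : ∀ n, UniformCauchySeqOn Y atTop (s n) := by
    intro n
    rw [Metric.uniformCauchySeqOn_iff]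
    intro δ hδ
    obtain ⟨N, hN, hnN⟩ :=
      ((hε.eventually (gt_mem_nhds (half_pos hδ))).and (eventually_ge_atTop n)).exists
    refine ⟨N, fun j hj k hk x hx ↦ ?_⟩
    calc dist (Y j x) (Y k x) ≤ dist (Y j x) (Y N x) + dist (Y k x) (Y N x) :=
          dist_triangle_right _ _ _
      _ ≤ ε N + ε N := add_le_add (hY N j hj x (hs hnN hx)) (hY N k hk x (hs hnN hx))
      _ < δ := by linarith
  refine ⟨fun x ↦ limUnder atTop fun k ↦ Y k x, fun n ↦ ?_⟩
  exact (hcauchy n).tendstoUniformlyOn_of_tendsto fun x hx ↦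
    ((hcauchy n).cauchySeq hx).tendsto_limUnder

/-! ### Nonnegative solutions of the Riccati equation -/

/-- `y` is a nonnegative solution on `s` of the Riccati equation `y' = y ^ 2 - q`. The derivative is
taken within `s`, so that the endpoints of an interval are allowed. -/
structure IsNonnegRiccatiSolOn (q y : ℝ → ℝ) (s : Set ℝ) : Prop where
  nonneg : ∀ z ∈ s, 0 ≤ y z
  hasDerivWithinAt : ∀ z ∈ s, HasDerivWithinAt y (y z ^ 2 - q z) s z

theorem isNonnegRiccatiSolOn_iff_of_isOpen {q y : ℝ → ℝ} {s : Set ℝ} (hs : IsOpen s) :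
    IsNonnegRiccatiSolOn q y s ↔
      ∀ z ∈ s, 0 ≤ y z ∧ HasDerivAt y (y z ^ 2 - q z) z :=
  ⟨fun h z hz ↦ ⟨h.nonneg z hz, (h.hasDerivWithinAt z hz).hasDerivAt (hs.mem_nhds hz)⟩,
    fun h ↦ ⟨fun z hz ↦ (h z hz).1, fun z hz ↦ (h z hz).2.hasDerivWithinAt⟩⟩

theorem exists_hasDerivWithinAt_projIcc_sq_sub {q : ℝ → ℝ} {a b t₀ M : ℝ} (hM : 0 ≤ M)
    (hq : ContinuousOn q (Icc a b)) (ht₀ : t₀ ∈ Icc a b) (y₀ : ℝ) :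
    ∃ y : ℝ → ℝ, y t₀ = y₀ ∧ ∀ z ∈ Icc a b,
      HasDerivWithinAt y ((projIcc 0 M hM (y z) : ℝ) ^ 2 - q z) (Icc a b) z := by
  obtain ⟨Q, hQ⟩ := isCompact_Icc.exists_bound_of_continuousOn hq
  have hQ_nonneg : 0 ≤ Q := (norm_nonneg _).trans (hQ t₀ ht₀)
  let trunc : ℝ → ℝ := fun x ↦ projIcc 0 M hM x
  have htrunc : ∀ x, trunc x ∈ Icc 0 M := fun x ↦ (projIcc 0 M hM x).2
  have hlip : ∀ t ∈ Icc a b,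
      LipschitzWith (.mk (2 * M) (by positivity)) fun x ↦ trunc x ^ 2 - q t := by
    intro t _
    refine LipschitzWith.of_dist_le_mul fun x x' ↦ ?_
    have hdist : |trunc x - trunc x'| ≤ |x - x'| := by
      simpa [Subtype.dist_eq, Real.dist_eq] using (LipschitzWith.projIcc hM).dist_le_mul x x'
    calc dist (trunc x ^ 2 - q t) (trunc x' ^ 2 - q t)
        = |trunc x + trunc x'| * |trunc x - trunc x'| := by
          rw [Real.dist_eq, ← abs_mul]; ring_nf
      _ ≤ 2 * M * |x - x'| := by
          gcongr
          rw [abs_of_nonneg (add_nonneg (htrunc x).1 (htrunc x').1)]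
          linarith [(htrunc x).2, (htrunc x').2]
  have hbdd : ∀ t ∈ Icc a b, ∀ x,
      ‖trunc x ^ 2 - q t‖ ≤ NNReal.mk (M ^ 2 + Q) (by positivity) := by
    intro t ht x
    refine (norm_sub_le _ _).trans (add_le_add ?_ (hQ t ht))
    rw [Real.norm_of_nonneg (sq_nonneg _)]
    exact pow_le_pow_left₀ (htrunc x).1 (htrunc x).2 2
  exact exists_hasDerivWithinAt_Icc_of_lipschitzWith hlip (fun x ↦ continuousOn_const.sub hq)
    hbdd ht₀ y₀

theorem exists_isNonnegRiccatiSolOn_Icc {q : ℝ → ℝ} {a b : ℝ} (hab : a ≤ b)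
    (hq : ContinuousOn q (Icc a b)) (hq_nonneg : ∀ z ∈ Icc a b, 0 ≤ q z) :
    ∃ y : ℝ → ℝ, y b = 0 ∧ IsNonnegRiccatiSolOn q y (Icc a b) := by
  obtain ⟨Q, hQ⟩ := isCompact_Icc.exists_bound_of_continuousOn hq
  have hb : b ∈ Icc a b := right_mem_Icc.mpr hab
  have hQ_nonneg : 0 ≤ Q := (norm_nonneg _).trans (hQ b hb)
  -- Solutions stay in `[0, Q * (b - a)]`, so truncating `y` in the vector field loses nothing.
  have hM : 0 ≤ Q * (b - a) := mul_nonneg hQ_nonneg (sub_nonneg.mpr hab)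
  obtain ⟨y, hyb, hy⟩ := exists_hasDerivWithinAt_projIcc_sq_sub hM hq hb 0
  have hy_nonneg : ∀ z ∈ Icc a b, 0 ≤ y z := fun z hz ↦ by
    refine nonneg_of_deriv_nonpos_of_neg hy hyb.ge (fun w hw hyw ↦ ?_) hz
    simpa [projIcc_of_le_left hM hyw.le] using hq_nonneg w hw
  have hy_le : ∀ z ∈ Icc a b, y z ≤ Q * (b - a) := fun z hz ↦ by
    have hgrowth := sub_le_mul_sub_of_neg_le_deriv hy (C := Q)
      (fun w hw ↦ by linarith [sq_nonneg (projIcc 0 _ hM (y w) : ℝ), (abs_le.mp (hQ w hw)).2]) hz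
    calc y z ≤ Q * (b - z) := by linarith
      _ ≤ Q * (b - a) := mul_le_mul_of_nonneg_left (sub_le_sub_left hz.1 b) hQ_nonneg
  refine ⟨y, hyb, hy_nonneg, fun z hz ↦ ?_⟩
  simpa only [projIcc_of_mem hM ⟨hy_nonneg z hz, hy_le z hz⟩] using hy z hz

namespace IsNonnegRiccatiSolOn

variable {q y y₁ y₂ : ℝ → ℝ} {s t : Set ℝ} {a b c : ℝ}

theorem mono (h : IsNonnegRiccatiSolOn q y t) (hst : s ⊆ t) : IsNonnegRiccatiSolOn q y s :=
  ⟨fun z hz ↦ h.nonneg z (hst hz), fun z hz ↦ (h.hasDerivWithinAt z (hst hz)).mono hst⟩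

theorem continuousOn (h : IsNonnegRiccatiSolOn q y s) : ContinuousOn y s :=
  fun z hz ↦ (h.hasDerivWithinAt z hz).continuousWithinAt

theorem pos (h : IsNonnegRiccatiSolOn q y s) (hs : IsOpen s) (hq : ∀ z ∈ s, 0 < q z) :
    ∀ z ∈ s, 0 < y z := by
  rw [isNonnegRiccatiSolOn_iff_of_isOpen hs] at h
  intro z hz
  refine (h z hz).1.lt_of_ne' fun hyz ↦ ?_
  have hmin : IsLocalMin y z := by
    filter_upwards [hs.mem_nhds hz] with w hw
    exact hyz.trans_le (h w hw).1
  have hderiv := hmin.hasDerivAt_eq_zero (h z hz).2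
  simp only [hyz] at hderiv
  linarith [hq z hz]

theorem antitoneOn (h : IsNonnegRiccatiSolOn q y s) (hs : Convex ℝ s)
    (hle : ∀ z ∈ s, y z ^ 2 ≤ q z) : AntitoneOn y s :=
  antitoneOn_of_hasDerivWithinAt_nonpos hs h.continuousOn
    (fun z hz ↦ (h.hasDerivWithinAt z (interior_subset hz)).mono interior_subset)
    fun z hz ↦ sub_nonpos.mpr (hle z (interior_subset hz))

theorem abs_sub_le_abs_sub (h₁ : IsNonnegRiccatiSolOn q y₁ (Icc a b))
    (h₂ : IsNonnegRiccatiSolOn q y₂ (Icc a b)) (hab : a ≤ b) :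
    |y₁ a - y₂ a| ≤ |y₁ b - y₂ b| := by
  have hderiv : ∀ z ∈ Icc a b, HasDerivWithinAt (fun z ↦ (y₁ z - y₂ z) ^ 2)
      (2 * (y₁ z + y₂ z) * (y₁ z - y₂ z) ^ 2) (Icc a b) z := fun z hz ↦ by
    refine (((h₁.hasDerivWithinAt z hz).sub (h₂.hasDerivWithinAt z hz)).pow 2).congr_deriv ?_
    simp only [Pi.sub_apply]
    ring
  have hmono : MonotoneOn (fun z ↦ (y₁ z - y₂ z) ^ 2) (Icc a b) := by
    refine monotoneOn_of_hasDerivWithinAt_nonneg (convex_Icc a b)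
      (fun z hz ↦ (hderiv z hz).continuousWithinAt)
      (fun z hz ↦ (hderiv z (interior_subset hz)).mono interior_subset) fun z hz ↦ ?_
    have := h₁.nonneg z (interior_subset hz)
    have := h₂.nonneg z (interior_subset hz)
    positivity
  exact sq_le_sq.mp (hmono (left_mem_Icc.mpr hab) (right_mem_Icc.mpr hab) hab)

theorem eqOn_of_tendsto (h₁ : IsNonnegRiccatiSolOn q y₁ (Ioi c))
    (h₂ : IsNonnegRiccatiSolOn q y₂ (Ioi c)) (hlim₁ : Tendsto y₁ atTop (𝓝 0))
    (hlim₂ : Tendsto y₂ atTop (𝓝 0)) : EqOn y₁ y₂ (Ioi c) := by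
  intro z hz
  have hlim : Tendsto (fun v ↦ |y₁ v - y₂ v|) atTop (𝓝 0) := by
    simpa using (hlim₁.sub hlim₂).abs
  have hle : |y₁ z - y₂ z| ≤ 0 := by
    refine ge_of_tendsto hlim ?_
    filter_upwards [eventually_ge_atTop z] with v hzv
    have hsub : Icc z v ⊆ Ioi c := fun x hx ↦ lt_of_lt_of_le hz hx.1
    exact (h₁.mono hsub).abs_sub_le_abs_sub (h₂.mono hsub) hzv
  exact sub_eq_zero.mp (abs_nonpos_iff.mp hle)

theorem le_of_lt_sq (h : IsNonnegRiccatiSolOn q y (Icc a b)) (hq : AntitoneOn q (Icc a b))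
    (hab : a ≤ b) (hlt : q a < y a ^ 2) : y a ≤ y b := by
  have hfence := image_le_of_deriv_right_lt_deriv_boundary'
    (f := fun z ↦ -y z) (f' := fun z ↦ -(y z ^ 2 - q z)) (B := fun _ ↦ -y a) (B' := fun _ ↦ 0)
    h.continuousOn.neg
    (fun z hz ↦ ((h.hasDerivWithinAt z ⟨hz.1, hz.2.le⟩).mono_of_mem_nhdsWithin
      (Icc_mem_nhdsGE_of_mem hz)).neg)
    le_rfl continuousOn_const (fun z _ ↦ hasDerivWithinAt_const _ _ _) (fun z hz hyz ↦ by
      have hqz : q z ≤ q a := hq (left_mem_Icc.mpr hab) ⟨hz.1, hz.2.le⟩ hz.1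
      rw [neg_injective hyz]
      linarith)
  exact neg_le_neg_iff.mp (hfence (right_mem_Icc.mpr hab))

theorem sq_le_of_sq_le (h : IsNonnegRiccatiSolOn q y (Icc a b)) (hq : AntitoneOn q (Icc a b))
    (hab : a ≤ b) (hb : y b ^ 2 ≤ q b) : y a ^ 2 ≤ q a := by
  by_contra! hlt
  have hle := h.le_of_lt_sq hq hab hlt
  have hsq : y a ^ 2 ≤ y b ^ 2 := pow_le_pow_left₀ (h.nonneg a (left_mem_Icc.mpr hab)) hle 2
  linarith [hq (left_mem_Icc.mpr hab) (right_mem_Icc.mpr hab) hab]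

theorem sq_le_of_tendsto (h : IsNonnegRiccatiSolOn q y (Ici b)) (hq : AntitoneOn q (Ici b))
    (hq_nonneg : ∀ z ∈ Ici b, 0 ≤ q z) (hlim : Tendsto y atTop (𝓝 0)) :
    ∀ z ∈ Ici b, y z ^ 2 ≤ q z := by
  intro z hz
  by_contra! hlt
  have hle : y z ≤ 0 := by
    refine ge_of_tendsto hlim ?_
    filter_upwards [eventually_ge_atTop z] with v hzv
    have hsub : Icc z v ⊆ Ici b := fun x hx ↦ hz.trans hx.1
    exact (h.mono hsub).le_of_lt_sq (hq.mono hsub) hzv hlt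
  have hzero : y z = 0 := hle.antisymm (h.nonneg z hz)
  rw [hzero] at hlt
  linarith [hq_nonneg z hz]

theorem exists_sq_le_Ioc (h : IsNonnegRiccatiSolOn q y (Ioc c a)) (hca : c < a)
    (hq : AntitoneOn q (Ioc c a)) (hlim : Tendsto q (𝓝[>] c) atTop) :
    ∃ w ∈ Ioc c a, ∀ z ∈ Ioc c w, y z ^ 2 ≤ q z := by
  obtain ⟨w, hw, hyw⟩ : ∃ w ∈ Ioc c a, y w ^ 2 ≤ q w := by
    by_contra! habove
    obtain ⟨w, hqw, hw⟩ :=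
      ((hlim.eventually_gt_atTop (y a ^ 2)).and (Ioc_mem_nhdsGT hca)).exists
    have hsub : Icc w a ⊆ Ioc c a := fun z hz ↦ ⟨hw.1.trans_le hz.1, hz.2⟩
    have hle := (h.mono hsub).le_of_lt_sq (hq.mono hsub) hw.2 (habove w hw)
    have hsq : y w ^ 2 ≤ y a ^ 2 := pow_le_pow_left₀ (h.nonneg w hw) hle 2
    linarith [habove w hw]
  refine ⟨w, hw, fun z hz ↦ ?_⟩
  have hsub : Icc z w ⊆ Ioc c a := fun x hx ↦ ⟨hz.1.trans_le hx.1, hx.2.trans hw.2⟩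
  exact (h.mono hsub).sq_le_of_sq_le (hq.mono hsub) hz.2 hyw

theorem of_tendstoLocallyUniformlyOn {ι : Type*} {l : Filter ι} [l.NeBot] {Y : ι → ℝ → ℝ}
    (hs : IsOpen s) (hY : ∀ᶠ n in l, IsNonnegRiccatiSolOn q (Y n) s)
    (hlim : TendstoLocallyUniformlyOn Y y l s) : IsNonnegRiccatiSolOn q y s := by
  have hy : ContinuousOn y s := hlim.continuousOn (hY.mono fun n hn ↦ hn.continuousOn).frequently
  have hderiv_lim : TendstoLocallyUniformlyOn (fun n z ↦ Y n z ^ 2 - q z)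
      (fun z ↦ y z ^ 2 - q z) l s := by
    have hconst : TendstoLocallyUniformlyOn (fun _ : ι ↦ q) q l s := fun u hu x _ ↦
      ⟨s, self_mem_nhdsWithin, .of_forall fun _ _ _ ↦ refl_mem_uniformity hu⟩
    simpa only [← sq] using! (hlim.mul₀ hlim hy hy).sub hconst
  rw [isNonnegRiccatiSolOn_iff_of_isOpen hs]
  refine fun z hz ↦ ⟨ge_of_tendsto (hlim.tendsto_at hz) (hY.mono fun n hn ↦ hn.nonneg z hz), ?_⟩
  exact hasDerivAt_of_tendstoLocallyUniformlyOn hs hderiv_lim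
    (hY.mono fun n hn z hz ↦ ((isNonnegRiccatiSolOn_iff_of_isOpen hs).mp hn z hz).2)
    (fun z hz ↦ hlim.tendsto_at hz) hz

theorem abs_sub_le_sqrt (h₁ : IsNonnegRiccatiSolOn q y₁ (Icc a b)) (hb : y₁ b = 0)
    (h₂ : IsNonnegRiccatiSolOn q y₂ (Icc a c)) (hc : y₂ c = 0) (hab : a ≤ b) (hbc : b ≤ c)
    (hq : AntitoneOn q (Icc b c)) (hqc : 0 ≤ q c) : |y₂ a - y₁ a| ≤ √(q b) := by
  have hsq : y₂ b ^ 2 ≤ q b :=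
    (h₂.mono (Icc_subset_Icc_left hab)).sq_le_of_sq_le hq hbc (by simpa [hc] using hqc)
  calc |y₂ a - y₁ a| ≤ |y₂ b - y₁ b| :=
        (h₂.mono (Icc_subset_Icc_right hbc)).abs_sub_le_abs_sub h₁ hab
    _ = |y₂ b| := by rw [hb, sub_zero]
    _ ≤ √(q b) := Real.abs_le_sqrt hsq

theorem of_tendstoUniformlyOn_exhaustion {Y : ℕ → ℝ → ℝ} {K : ℕ → Set ℝ} (hs : IsOpen s)
    (hK : Monotone K) (hKs : ∀ z ∈ s, ∃ n, K n ∈ 𝓝 z)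
    (hY : ∀ n, IsNonnegRiccatiSolOn q (Y n) (K n))
    (hlim : ∀ n, TendstoUniformlyOn Y y atTop (K n)) : IsNonnegRiccatiSolOn q y s := by
  rw [isNonnegRiccatiSolOn_iff_of_isOpen hs]
  intro z hz
  obtain ⟨N, hN⟩ := hKs z hz
  have hsol : IsNonnegRiccatiSolOn q y (interior (K N)) := by
    refine .of_tendstoLocallyUniformlyOn isOpen_interior ?_
      ((hlim N).mono interior_subset).tendstoLocallyUniformlyOn
    filter_upwards [eventually_ge_atTop N] with n hn
    exact (hY n).mono (interior_subset.trans (hK hn))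
  exact (isNonnegRiccatiSolOn_iff_of_isOpen isOpen_interior).mp hsol z
    (mem_interior_iff_mem_nhds.mpr hN)

end IsNonnegRiccatiSolOn

/-- An exhaustion of `(0, ∞)` by compact intervals whose right endpoints are all at least `b`. -/
def exhaustingIcc (b : ℝ) (n : ℕ) : Set ℝ := Icc (b / (n + 1)) (b + n)

section exhaustingIcc

variable {b z : ℝ}

theorem exhaustingIcc_subset_Ioi (hb : 0 < b) (n : ℕ) : exhaustingIcc b n ⊆ Ioi 0 :=
  fun _ hz ↦ lt_of_lt_of_le (by positivity) hz.1

theorem monotone_exhaustingIcc (hb : 0 < b) : Monotone (exhaustingIcc b) := fun n k hnk ↦ by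
  have : (n : ℝ) ≤ k := Nat.cast_le.mpr hnk
  exact Icc_subset_Icc (by gcongr) (by gcongr)

theorem eventually_exhaustingIcc_mem_nhds (hz : 0 < z) :
    ∀ᶠ n in atTop, exhaustingIcc b n ∈ 𝓝 z := by
  have hleft : Tendsto (fun n : ℕ ↦ b / ((n : ℝ) + 1)) atTop (𝓝 0) := by
    simpa [div_eq_mul_inv] using tendsto_one_div_add_atTop_nhds_zero_nat.const_mul b
  have hright : Tendsto (fun n : ℕ ↦ b + (n : ℝ)) atTop atTop :=
    tendsto_atTop_add_const_left _ _ tendsto_natCast_atTop_atTop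
  filter_upwards [hleft.eventually (gt_mem_nhds hz), hright.eventually_gt_atTop z] with n h₁ h₂
  exact Icc_mem_nhds h₁ h₂

theorem exists_isNonnegRiccatiSolOn_exhaustingIcc {q : ℝ → ℝ} (hb : 0 < b)
    (hq : ContinuousOn q (Ioi 0)) (hq_nonneg : ∀ z ∈ Ioi 0, 0 ≤ q z) (n : ℕ) :
    ∃ y : ℝ → ℝ, y (b + n) = 0 ∧ IsNonnegRiccatiSolOn q y (exhaustingIcc b n) := by
  have hle : b / (n + 1) ≤ b + n :=
    (div_le_self hb.le (by simp)).trans (le_add_of_nonneg_right n.cast_nonneg)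
  have hsub := exhaustingIcc_subset_Ioi hb n
  exact exists_isNonnegRiccatiSolOn_Icc hle (hq.mono hsub) fun z hz ↦ hq_nonneg z (hsub hz)

end exhaustingIcc

theorem exists_isNonnegRiccatiSolOn_Ioi {q : ℝ → ℝ} {b : ℝ} (hb : 0 < b)
    (hq : ContinuousOn q (Ioi 0)) (hq_nonneg : ∀ z ∈ Ioi 0, 0 ≤ q z)
    (hq_anti : AntitoneOn q (Ici b)) (hq_lim : Tendsto q atTop (𝓝 0)) :
    ∃ y : ℝ → ℝ, IsNonnegRiccatiSolOn q y (Ioi 0) ∧ Tendsto y atTop (𝓝 0) := by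
  choose Y hY_end hY using exists_isNonnegRiccatiSolOn_exhaustingIcc hb hq hq_nonneg
  have hmono := monotone_exhaustingIcc hb
  have hY_dist : ∀ n k, n ≤ k → ∀ z ∈ exhaustingIcc b n,
      dist (Y k z) (Y n z) ≤ √(q (b + n)) := by
    intro n k hnk z hz
    refine ((hY n).mono (Icc_subset_Icc_left hz.1)).abs_sub_le_sqrt (hY_end n)
      ((hY k).mono (Icc_subset_Icc_left (hmono hnk hz).1)) (hY_end k) hz.2 (by gcongr)
      (hq_anti.mono fun x hx ↦ ?_) (hq_nonneg _ (mem_Ioi.mpr (by positivity)))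
    exact le_trans (by simp) hx.1
  have hε : Tendsto (fun n : ℕ ↦ √(q (b + n))) atTop (𝓝 0) := by
    simpa using (hq_lim.comp
      (tendsto_atTop_add_const_left _ b tendsto_natCast_atTop_atTop)).sqrt
  obtain ⟨y, hy⟩ := exists_tendstoUniformlyOn_of_dist_le hmono hε hY_dist
  have hy_sol : IsNonnegRiccatiSolOn q y (Ioi 0) :=
    .of_tendstoUniformlyOn_exhaustion isOpen_Ioi hmono
      (fun z hz ↦ (eventually_exhaustingIcc_mem_nhds hz).exists) hY hy
  have hy_le : ∀ z ∈ Ici b, y z ≤ √(q z) := by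
    intro z hz
    have hmem := eventually_exhaustingIcc_mem_nhds (b := b) (hb.trans_le hz)
    obtain ⟨N, hN⟩ := hmem.exists
    refine le_of_tendsto ((hy N).tendsto_at (mem_of_mem_nhds hN)) ?_
    filter_upwards [hmem] with n hn
    have hzn := mem_of_mem_nhds hn
    refine Real.le_sqrt_of_sq_le (((hY n).mono (Icc_subset_Icc_left hzn.1)).sq_le_of_sq_le
      (hq_anti.mono fun x hx ↦ le_trans hz hx.1) hzn.2 ?_)
    simpa [hY_end] using hq_nonneg (b + n) (mem_Ioi.mpr (by positivity))
  refine ⟨y, hy_sol, squeeze_zero' (g := fun z ↦ √(q z)) ?_ ?_ (by simpa using hq_lim.sqrt)⟩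
  · filter_upwards [eventually_gt_atTop 0] with z hz using hy_sol.nonneg z hz
  · filter_upwards [eventually_ge_atTop b] with z hz using hy_le z hz

/-! ### Coefficients decreasing at both ends of the half-line -/

/-- `φ` restricts to an increasing bijection of `[0, ∞)` onto itself, as the inverse of `I` does.
Its values on negative numbers are arbitrary. -/
structure IsHalfLineAut (φ : ℝ → ℝ) : Prop where
  monotoneOn : MonotoneOn φ (Ici 0)
  bijOn : BijOn φ (Ici 0) (Ici 0)

namespace IsHalfLineAut

variable {φ : ℝ → ℝ}

theorem continuousOn (h : IsHalfLineAut φ) : ContinuousOn φ (Ici 0) := by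
  have hmono : Monotone h.bijOn.mapsTo.restrict := fun x y hxy ↦ h.monotoneOn x.2 y.2 hxy
  exact continuousOn_iff_continuous_domRestrict.mpr <| continuous_subtype_val.comp <|
    hmono.continuous_of_surjective (h.bijOn.mapsTo.restrict_surjective_iff.mpr h.bijOn.surjOn)

theorem map_zero (h : IsHalfLineAut φ) : φ 0 = 0 := by
  obtain ⟨x, hx, hφx⟩ := h.bijOn.surjOn self_mem_Ici
  exact (hφx ▸ h.monotoneOn self_mem_Ici hx hx).antisymm (h.bijOn.mapsTo self_mem_Ici)

theorem mapsTo_Ioi (h : IsHalfLineAut φ) : MapsTo φ (Ioi 0) (Ioi 0) := fun _ hz ↦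
  (h.bijOn.mapsTo (mem_Ici_of_Ioi hz)).lt_of_ne fun hφz ↦
    (mem_Ioi.mp hz).ne (h.bijOn.injOn self_mem_Ici (mem_Ici_of_Ioi hz) (h.map_zero.trans hφz))

theorem exists_pos_eq (h : IsHalfLineAut φ) {x : ℝ} (hx : 0 < x) : ∃ z, 0 < z ∧ φ z = x := by
  obtain ⟨z, hz, rfl⟩ := h.bijOn.surjOn (mem_Ici.mpr hx.le)
  exact ⟨z, hz.lt_of_ne (by rintro rfl; exact hx.ne' h.map_zero), rfl⟩

theorem tendsto_nhdsGT_zero (h : IsHalfLineAut φ) : Tendsto φ (𝓝[>] 0) (𝓝[>] 0) := by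
  have hcont := (h.continuousOn 0 self_mem_Ici).mono Ioi_subset_Ici_self
  have := hcont.tendsto_nhdsWithin h.mapsTo_Ioi
  rwa [h.map_zero] at this

theorem tendsto_atTop (h : IsHalfLineAut φ) : Tendsto φ atTop atTop := by
  refine Filter.tendsto_atTop.mpr fun B ↦ ?_
  obtain ⟨z, hz, hφz⟩ := h.exists_pos_eq (x := max B 1) (by positivity)
  filter_upwards [eventually_ge_atTop z] with w hzw
  calc B ≤ φ z := hφz ▸ le_max_left B 1
    _ ≤ φ w := h.monotoneOn hz.le (hz.le.trans hzw) hzw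

end IsHalfLineAut

/-- `g` is a positive continuous function on `(0, ∞)` which decreases near `0`, where it blows up,
and near `∞`, where it vanishes. This is all that is needed of the coefficient `q` of the Riccati
equation `y' = y ^ 2 - q`. -/
structure DecreasingAtEnds (g : ℝ → ℝ) : Prop where
  continuousOn : ContinuousOn g (Ioi 0)
  pos : ∀ z ∈ Ioi 0, 0 < g z
  exists_antitoneOn_Ioc : ∃ a > 0, AntitoneOn g (Ioc 0 a)
  exists_antitoneOn_Ici : ∃ b > 0, AntitoneOn g (Ici b)
  tendsto_nhdsGT_zero : Tendsto g (𝓝[>] 0) atTop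
  tendsto_atTop : Tendsto g atTop (𝓝 0)

namespace DecreasingAtEnds

variable {g q y : ℝ → ℝ}

theorem const_mul_sq (h : DecreasingAtEnds g) {lam : ℝ} (hlam : 0 < lam) :
    DecreasingAtEnds fun z ↦ lam * g z ^ 2 := by
  have hanti : ∀ s ⊆ Ioi 0, AntitoneOn g s → AntitoneOn (fun z ↦ lam * g z ^ 2) s :=
    fun s hs hg x hx y hy hxy ↦ by
      have := (h.pos y (hs hy)).le
      have := hg hx hy hxy
      dsimp only
      gcongr
  obtain ⟨a, ha, hga⟩ := h.exists_antitoneOn_Ioc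
  obtain ⟨b, hb, hgb⟩ := h.exists_antitoneOn_Ici
  exact
    { continuousOn := continuousOn_const.mul (h.continuousOn.pow 2)
      pos := fun z hz ↦ mul_pos hlam (pow_pos (h.pos z hz) 2)
      exists_antitoneOn_Ioc := ⟨a, ha, hanti _ (fun _ hz ↦ hz.1) hga⟩
      exists_antitoneOn_Ici := ⟨b, hb, hanti _ (Ici_subset_Ioi.mpr hb) hgb⟩
      tendsto_nhdsGT_zero :=
        ((tendsto_pow_atTop two_ne_zero).comp h.tendsto_nhdsGT_zero).const_mul_atTop hlam
      tendsto_atTop := by simpa using (h.tendsto_atTop.pow 2).const_mul lam }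

theorem comp {φ : ℝ → ℝ} (h : DecreasingAtEnds g) (hφ : IsHalfLineAut φ) :
    DecreasingAtEnds (g ∘ φ) := by
  obtain ⟨a, ha, hga⟩ := h.exists_antitoneOn_Ioc
  obtain ⟨b, hb, hgb⟩ := h.exists_antitoneOn_Ici
  obtain ⟨a', ha', rfl⟩ := hφ.exists_pos_eq ha
  obtain ⟨b', hb', rfl⟩ := hφ.exists_pos_eq hb
  have hmono_a : MonotoneOn φ (Ioc 0 a') := hφ.monotoneOn.mono fun _ hz ↦ hz.1.le
  have hmono_b : MonotoneOn φ (Ici b') := hφ.monotoneOn.mono (Ici_subset_Ici.mpr hb'.le)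
  exact
    { continuousOn := h.continuousOn.comp (hφ.continuousOn.mono Ioi_subset_Ici_self) hφ.mapsTo_Ioi
      pos := fun z hz ↦ h.pos _ (hφ.mapsTo_Ioi hz)
      exists_antitoneOn_Ioc := ⟨a', ha', hga.comp_MonotoneOn hmono_a fun z hz ↦
        ⟨hφ.mapsTo_Ioi hz.1, hmono_a hz (right_mem_Ioc.mpr ha') hz.2⟩⟩
      exists_antitoneOn_Ici := ⟨b', hb', hgb.comp_MonotoneOn hmono_b fun z hz ↦
        hmono_b self_mem_Ici hz hz⟩
      tendsto_nhdsGT_zero := h.tendsto_nhdsGT_zero.comp hφ.tendsto_nhdsGT_zero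
      tendsto_atTop := h.tendsto_atTop.comp hφ.tendsto_atTop }

theorem exists_isNonnegRiccatiSolOn (h : DecreasingAtEnds q) :
    ∃ y : ℝ → ℝ, IsNonnegRiccatiSolOn q y (Ioi 0) ∧ Tendsto y atTop (𝓝 0) :=
  let ⟨_, hb, hqb⟩ := h.exists_antitoneOn_Ici
  exists_isNonnegRiccatiSolOn_Ioi hb h.continuousOn (fun z hz ↦ (h.pos z hz).le) hqb
    h.tendsto_atTop

theorem exists_sq_le_and_antitoneOn (h : DecreasingAtEnds q) (hy : IsNonnegRiccatiSolOn q y (Ioi 0))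
    (hlim : Tendsto y atTop (𝓝 0)) :
    ∃ a b, 0 < a ∧ a ≤ b ∧ (∀ z ∈ Ioc 0 a ∪ Ici b, y z ^ 2 ≤ q z) ∧
      AntitoneOn y (Ioc 0 a) ∧ AntitoneOn y (Ici b) := by
  obtain ⟨a, ha, hqa⟩ := h.exists_antitoneOn_Ioc
  obtain ⟨b, hb, hqb⟩ := h.exists_antitoneOn_Ici
  have hy_b := hy.mono (Ici_subset_Ioi.mpr hb)
  obtain ⟨w, hw, hle_w⟩ :=
    (hy.mono Ioc_subset_Ioi_self).exists_sq_le_Ioc ha hqa h.tendsto_nhdsGT_zero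
  have hle_b := hy_b.sq_le_of_tendsto hqb (fun z hz ↦ (h.pos z (hb.trans_le hz)).le) hlim
  have hsub : Ici (max w b) ⊆ Ici b := Ici_subset_Ici.mpr (le_max_right w b)
  exact ⟨w, max w b, hw.1, le_max_left w b, fun z hz ↦ hz.elim (hle_w z) (hle_b z <| hsub ·),
    (hy.mono Ioc_subset_Ioi_self).antitoneOn (convex_Ioc 0 w) hle_w,
    (hy_b.antitoneOn (convex_Ici b) hle_b).mono hsub⟩

theorem exists_le_sqrt_mul_and_antitoneOn (h : DecreasingAtEnds g) {lam : ℝ} (hlam : 0 < lam)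
    (hy : IsNonnegRiccatiSolOn (fun z ↦ lam * g z ^ 2) y (Ioi 0)) (hlim : Tendsto y atTop (𝓝 0)) :
    ∃ a b, 0 < a ∧ a ≤ b ∧ (∀ z ∈ Ioc 0 a ∪ Ici b, y z ≤ √lam * g z) ∧
      AntitoneOn y (Ioc 0 a) ∧ AntitoneOn y (Ici b) := by
  obtain ⟨a, b, ha, hab, hle, hanti⟩ := (h.const_mul_sq hlam).exists_sq_le_and_antitoneOn hy hlim
  refine ⟨a, b, ha, hab, fun z hz ↦ ?_, hanti⟩
  have hz_pos : 0 < z := hz.elim (fun hz ↦ hz.1) fun hz ↦ (ha.trans_le hab).trans_le hz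
  calc y z ≤ √(lam * g z ^ 2) := Real.le_sqrt_of_sq_le (hle z hz)
    _ = √lam * g z := by rw [Real.sqrt_mul hlam.le, Real.sqrt_sq (h.pos z hz_pos).le]

end DecreasingAtEnds

/-! ### The change of variable and the coefficient `r` -/

theorem continuousOn_Ici_primitive {E : Type*} [NormedAddCommGroup E] [NormedSpace ℝ E]
    {f : ℝ → E} {a : ℝ} (hf : ∀ x, a ≤ x → IntervalIntegrable f volume a x) :
    ContinuousOn (fun x ↦ ∫ u in a..x, f u) (Ici a) := by
  intro x hx
  have hcont := intervalIntegral.continuousOn_primitive_interval'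
    (hf (x + 1) (le_add_of_le_of_nonneg hx zero_le_one)) left_mem_uIcc
  rw [uIcc_of_le (le_add_of_le_of_nonneg hx zero_le_one)] at hcont
  refine (hcont x ⟨hx, (lt_add_one x).le⟩).mono_of_mem_nhdsWithin ?_
  rw [← Ici_inter_Iic]
  exact inter_mem_nhdsWithin _ (Iic_mem_nhds (lt_add_one x))

/-- The change of variable `I(x) = ∫₀ˣ exp (m u) du` of `[0, ∞)`; its inverse is `φ`. -/
noncomputable def scale (m : ℝ → ℝ) (x : ℝ) : ℝ := ∫ u in (0 : ℝ)..x, Real.exp (m u)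

section scale

variable {m φ : ℝ → ℝ}

theorem intervalIntegrable_exp (hm : ContinuousOn m (Ici 0)) {x : ℝ} (hx : 0 ≤ x) :
    IntervalIntegrable (fun u ↦ Real.exp (m u)) volume 0 x := by
  refine (hm.rexp.mono ?_).intervalIntegrable
  rw [uIcc_of_le hx]
  exact Icc_subset_Ici_self

theorem hasDerivAt_scale (hm : ContinuousOn m (Ici 0)) {x : ℝ} (hx : 0 < x) :
    HasDerivAt (scale m) (Real.exp (m x)) x := by
  have hexp : ContinuousOn (fun u ↦ Real.exp (m u)) (Ioi 0) := hm.rexp.mono Ioi_subset_Ici_self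
  exact intervalIntegral.integral_hasDerivAt_right (intervalIntegrable_exp hm hx.le)
    (hexp.stronglyMeasurableAtFilter isOpen_Ioi x hx) (hexp.continuousAt (Ioi_mem_nhds hx))

theorem strictMonoOn_scale (hm : ContinuousOn m (Ici 0)) : StrictMonoOn (scale m) (Ici 0) := by
  refine strictMonoOn_of_hasDerivWithinAt_pos (f' := fun x ↦ Real.exp (m x)) (convex_Ici 0)
    (continuousOn_Ici_primitive fun x hx ↦ intervalIntegrable_exp hm hx) (fun x hx ↦ ?_)
    fun x _ ↦ Real.exp_pos (m x)
  rw [interior_Ici] at hx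
  exact (hasDerivAt_scale hm hx).hasDerivWithinAt

theorem scale_zero (m : ℝ → ℝ) : scale m 0 = 0 := intervalIntegral.integral_same

theorem scale_nonpos_of_nonpos {x : ℝ} (hx : x ≤ 0) : scale m x ≤ 0 := by
  rw [scale, intervalIntegral.integral_symm, neg_nonpos]
  exact intervalIntegral.integral_nonneg hx fun u _ ↦ (Real.exp_pos (m u)).le

theorem isHalfLineAut_of_invOn_scale (hm : ContinuousOn m (Ici 0))
    (hφ : InvOn φ (scale m) (Ici 0) (Ici 0)) : IsHalfLineAut φ := by
  have hmono := strictMonoOn_scale hm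
  have hscale : MapsTo (scale m) (Ici 0) (Ici 0) := fun x hx ↦
    (scale_zero m).ge.trans (hmono.monotoneOn self_mem_Ici hx hx)
  have hmaps : MapsTo φ (Ici 0) (Ici 0) := by
    intro z hz
    by_contra! hφz
    have hφz : φ z < 0 := not_le.mp hφz
    have hz0 : z = 0 := le_antisymm (hφ.2 hz ▸ scale_nonpos_of_nonpos hφz.le) hz
    have hφ0 : φ 0 = 0 := by simpa only [scale_zero] using hφ.1 self_mem_Ici
    rw [hz0, hφ0] at hφz
    exact hφz.false
  refine ⟨fun x hx y hy hxy ↦ ?_, hφ.symm.bijOn hmaps hscale⟩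
  rwa [← hmono.le_iff_le (hmaps hx) (hmaps hy), hφ.2 hx, hφ.2 hy]

theorem hasDerivAt_of_invOn_scale (hm : ContinuousOn m (Ici 0))
    (hφ : InvOn φ (scale m) (Ici 0) (Ici 0)) {z : ℝ} (hz : 0 < z) :
    HasDerivAt φ (Real.exp (-(m (φ z)))) z := by
  have haut := isHalfLineAut_of_invOn_scale hm hφ
  rw [Real.exp_neg]
  refine (hasDerivAt_scale hm (haut.mapsTo_Ioi hz)).of_local_left_inverse
    (haut.continuousOn.continuousAt (Ici_mem_nhds hz)) (Real.exp_ne_zero _) ?_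
  filter_upwards [Ioi_mem_nhds hz] with w hw
  exact hφ.2 (mem_Ici_of_Ioi hw)

end scale

theorem integrableOn_Ioo_of_norm_le {E : Type*} [NormedAddCommGroup E] {f : ℝ → E} {g : ℝ → ℝ}
    {a b c : ℝ} (hf : ContinuousOn f (Ioi c)) (hca : c < a) (hle : ∀ z ∈ Ioc c a, ‖f z‖ ≤ g z)
    (hg : IntegrableOn g (Ioo c b)) : IntegrableOn f (Ioo c b) := by
  have hmeas : MeasurableSet (Ioo c b ∩ Ioc c a) := measurableSet_Ioo.inter measurableSet_Ioc
  have hleft : IntegrableOn f (Ioo c b ∩ Ioc c a) :=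
    (hg.mono_set inter_subset_left).mono'
      ((hf.mono fun z hz ↦ hz.1.1).aestronglyMeasurable hmeas)
      (ae_restrict_of_forall_mem hmeas fun z hz ↦ hle z hz.2)
  have hright : IntegrableOn f (Icc a b) := (hf.mono fun z hz ↦ hca.trans_le hz.1).integrableOn_Icc
  refine (hleft.union hright).mono_set fun z hz ↦ ?_
  rcases le_total z a with hza | haz
  · exact Or.inl ⟨hz, hz.1, hza⟩
  · exact Or.inr ⟨haz, hz.2.le⟩

theorem integrableOn_deriv_div_sqrt {f f' : ℝ → ℝ} {a b : ℝ} (hf : ContinuousOn f (Icc a b))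
    (hderiv : ∀ z ∈ Ioo a b, HasDerivAt f (f' z) z) (hpos : ∀ z ∈ Ioo a b, 0 < f z)
    (hf' : ∀ z ∈ Ioo a b, 0 ≤ f' z) : IntegrableOn (fun z ↦ f' z / √(f z)) (Ioo a b) := by
  have hint := intervalIntegral.integrableOn_deriv_of_nonneg
    (g := fun z ↦ 2 * √(f z)) (g' := fun z ↦ f' z / √(f z)) (continuousOn_const.mul hf.sqrt)
    (fun z hz ↦ (((hderiv z hz).sqrt (hpos z hz).ne').const_mul 2).congr_deriv (by ring))
    (fun z hz ↦ div_nonneg (hf' z hz) (Real.sqrt_nonneg _))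
  exact hint.mono_set Ioo_subset_Ioc_self

/-- The quadratic `ω(z) = c z + σ² z² / 2` through which the parameters `c` and `σ` enter. -/
noncomputable def quadraticRate (c σ z : ℝ) : ℝ := c * z + σ ^ 2 * z ^ 2 / 2

section quadraticRate

variable {c σ z : ℝ}

theorem mul_le_quadraticRate (c σ z : ℝ) : c * z ≤ quadraticRate c σ z :=
  le_add_of_nonneg_right (by positivity)

theorem quadraticRate_pos (hc : 0 < c) (σ : ℝ) (hz : 0 < z) : 0 < quadraticRate c σ z :=
  (mul_pos hc hz).trans_le (mul_le_quadraticRate c σ z)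

theorem hasDerivAt_quadraticRate (c σ z : ℝ) :
    HasDerivAt (quadraticRate c σ) (c + σ ^ 2 * z) z := by
  refine (((hasDerivAt_id z).const_mul c).add
    ((((hasDerivAt_id z).pow 2).const_mul (σ ^ 2)).div_const 2)).congr_deriv ?_
  simp
  ring

theorem continuous_quadraticRate (c σ : ℝ) : Continuous (quadraticRate c σ) :=
  continuous_iff_continuousAt.mpr fun z ↦ (hasDerivAt_quadraticRate c σ z).continuousAt

theorem tendsto_quadraticRate_atTop (hc : 0 < c) (σ : ℝ) :
    Tendsto (quadraticRate c σ) atTop atTop :=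
  tendsto_atTop_mono (mul_le_quadraticRate c σ) (tendsto_id.const_mul_atTop hc)

end quadraticRate

/-- The function `m(x) = ∫₀ˣ ψ / ω`, the logarithm of the derivative of `I`. -/
noncomputable def logScale (ψ ω : ℝ → ℝ) (x : ℝ) : ℝ := ∫ u in (0 : ℝ)..x, ψ u / ω u

/-- The function `exp (-m) / √ω`, which turns into the coefficient `r` upon composition with the
inverse of `scale m`. -/
noncomputable def profile (m ω : ℝ → ℝ) (x : ℝ) : ℝ := Real.exp (-(m x)) / √(ω x)

section profile

variable {ψ ω m ω' : ℝ → ℝ} {s : Set ℝ} {c σ : ℝ}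

theorem profile_nonneg (m ω : ℝ → ℝ) (x : ℝ) : 0 ≤ profile m ω x :=
  div_nonneg (Real.exp_pos _).le (Real.sqrt_nonneg _)

theorem profile_eq_exp {x : ℝ} (hω : 0 < ω x) :
    profile m ω x = Real.exp (-(m x + Real.log (ω x) / 2)) := by
  rw [profile, neg_add, ← sub_eq_add_neg, Real.exp_sub, ← Real.log_sqrt hω.le,
    Real.exp_log (Real.sqrt_pos.mpr hω)]

theorem antitoneOn_profile_logScale (hs : s.OrdConnected)
    (hint : ∀ x ∈ s, IntervalIntegrable (fun u ↦ ψ u / ω u) volume 0 x)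
    (hω : ∀ x ∈ s, HasDerivAt ω (ω' x) x) (hω_pos : ∀ x ∈ s, 0 < ω x)
    (hψ : ∀ x ∈ s, -(ω' x / 2) ≤ ψ x) : AntitoneOn (profile (logScale ψ ω) ω) s := by
  intro x hx z hz hxz
  have hsub : Icc x z ⊆ s := hs.out hx hz
  have hlog : ∀ u ∈ Icc x z,
      HasDerivAt (fun u ↦ -(Real.log (ω u) / 2)) (-(ω' u / ω u / 2)) u := fun u hu ↦
    (((hω u (hsub hu)).log (hω_pos u (hsub hu)).ne').div_const 2).neg
  have hxz_int := (hint x hx).symm.trans (hint z hz)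
  have hgrowth := intervalIntegral.sub_le_integral_of_hasDeriv_right_of_le hxz
    (fun u hu ↦ (hlog u hu).continuousAt.continuousWithinAt)
    (fun u hu ↦ (hlog u (Ioo_subset_Icc_self hu)).hasDerivWithinAt)
    ((intervalIntegrable_iff_integrableOn_Icc_of_le hxz).mp hxz_int)
    fun u hu ↦ by
      have hu := hsub (Ioo_subset_Icc_self hu)
      calc -(ω' u / ω u / 2) = -(ω' u / 2) / ω u := by ring
        _ ≤ ψ u / ω u := div_le_div_of_nonneg_right (hψ u hu) (hω_pos u hu).le
  have hlogScale : logScale ψ ω z - logScale ψ ω x = ∫ u in x..z, ψ u / ω u :=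
    intervalIntegral.integral_interval_sub_left (hint z hz) (hint x hx)
  rw [profile_eq_exp (hω_pos x hx), profile_eq_exp (hω_pos z hz), Real.exp_le_exp]
  linarith

theorem tendsto_profile_nhdsGT_zero (hm : ContinuousOn m (Ici 0)) (hω : ContinuousAt ω 0)
    (hω_zero : ω 0 = 0) (hω_pos : ∀ x ∈ Ioi 0, 0 < ω x) :
    Tendsto (profile m ω) (𝓝[>] 0) atTop := by
  have hexp : Tendsto (fun x ↦ Real.exp (-(m x))) (𝓝[>] 0) (𝓝 (Real.exp (-(m 0)))) :=
    ((hm 0 self_mem_Ici).mono Ioi_subset_Ici_self).neg.rexp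
  have hsqrt : Tendsto (fun x ↦ √(ω x)) (𝓝[>] 0) (𝓝[>] 0) := by
    refine tendsto_nhdsWithin_iff.mpr ⟨?_, ?_⟩
    · simpa [hω_zero] using hω.sqrt.tendsto.mono_left nhdsWithin_le_nhds
    · filter_upwards [self_mem_nhdsWithin] with x hx using Real.sqrt_pos.mpr (hω_pos x hx)
  exact hexp.pos_mul_atTop (Real.exp_pos _) hsqrt.inv_tendsto_nhdsGT_zero

theorem continuousOn_logScale
    (hint : ∀ x, 0 ≤ x → IntervalIntegrable (fun u ↦ ψ u / ω u) volume 0 x) :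
    ContinuousOn (logScale ψ ω) (Ici 0) :=
  continuousOn_Ici_primitive hint

theorem logScale_le_logScale {x z : ℝ} (hxz : x ≤ z)
    (hx : IntervalIntegrable (fun u ↦ ψ u / ω u) volume 0 x)
    (hz : IntervalIntegrable (fun u ↦ ψ u / ω u) volume 0 z)
    (hψω : ∀ u ∈ Icc x z, 0 ≤ ψ u / ω u) : logScale ψ ω x ≤ logScale ψ ω z := by
  rw [← sub_nonneg, logScale, logScale, intervalIntegral.integral_interval_sub_left hz hx]
  exact intervalIntegral.integral_nonneg hxz hψω

theorem tendsto_profile_logScale_atTop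
    (hint : ∀ x, 0 ≤ x → IntervalIntegrable (fun u ↦ ψ u / ω u) volume 0 x)
    (hψ : ∀ᶠ u in atTop, 0 ≤ ψ u) (hω : Tendsto ω atTop atTop) :
    Tendsto (profile (logScale ψ ω) ω) atTop (𝓝 0) := by
  obtain ⟨b, hψω, hb⟩ := ((eventually_forall_ge_atTop.mpr (hψ.and (hω.eventually_ge_atTop 0))).and
    (eventually_ge_atTop 0)).exists
  refine squeeze_zero' (g := fun x ↦ Real.exp (-(logScale ψ ω b)) / √(ω x))
    (.of_forall (profile_nonneg _ ω)) ?_ ((Real.tendsto_sqrt_atTop.comp hω).const_div_atTop _)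
  filter_upwards [eventually_ge_atTop b] with x hbx
  have hle : logScale ψ ω b ≤ logScale ψ ω x :=
    logScale_le_logScale hbx (hint b hb) (hint x (hb.trans hbx))
      fun u hu ↦ div_nonneg (hψω u hu.1).1 (hψω u hu.1).2
  exact div_le_div_of_nonneg_right (Real.exp_le_exp.mpr (neg_le_neg hle)) (Real.sqrt_nonneg _)

theorem decreasingAtEnds_profile (hc : 0 < c)
    (hint : ∀ x, 0 ≤ x → IntervalIntegrable (fun u ↦ ψ u / quadraticRate c σ u) volume 0 x)
    (hψ_zero : ∀ᶠ u in 𝓝[>] 0, -(c / 2) ≤ ψ u) (hψ_atTop : ∀ᶠ u in atTop, 0 ≤ ψ u) :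
    DecreasingAtEnds (profile (logScale ψ (quadraticRate c σ)) (quadraticRate c σ)) := by
  have hω_pos : ∀ u ∈ Ioi 0, 0 < quadraticRate c σ u := fun u hu ↦ quadraticRate_pos hc σ hu
  have hanti : ∀ s : Set ℝ, s.OrdConnected → s ⊆ Ioi 0 → (∀ u ∈ s, -(c / 2) ≤ ψ u) →
      AntitoneOn (profile (logScale ψ (quadraticRate c σ)) (quadraticRate c σ)) s :=
    fun s hs hs_pos hψ ↦ antitoneOn_profile_logScale hs (fun u hu ↦ hint u (hs_pos hu).le)
      (fun u _ ↦ hasDerivAt_quadraticRate c σ u) (fun u hu ↦ hω_pos u (hs_pos hu)) fun u hu ↦ by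
        have : 0 ≤ σ ^ 2 * u := mul_nonneg (sq_nonneg σ) (hs_pos hu).le
        linarith [hψ u hu]
  have hm := continuousOn_logScale hint
  obtain ⟨a, ha, hψa⟩ := mem_nhdsGT_iff_exists_Ioc_subset.mp hψ_zero
  obtain ⟨b, hψb, hb⟩ :=
    ((eventually_forall_ge_atTop.mpr hψ_atTop).and (eventually_gt_atTop 0)).exists
  exact
    { continuousOn := ((hm.mono Ioi_subset_Ici_self).neg.rexp).div
        (continuous_quadraticRate c σ).continuousOn.sqrt
        fun u hu ↦ (Real.sqrt_pos.mpr (hω_pos u hu)).ne'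
      pos := fun u hu ↦ div_pos (Real.exp_pos _) (Real.sqrt_pos.mpr (hω_pos u hu))
      exists_antitoneOn_Ioc := ⟨a, ha, hanti _ ordConnected_Ioc (fun _ hu ↦ hu.1) hψa⟩
      exists_antitoneOn_Ici := ⟨b, hb, hanti _ ordConnected_Ici (Ici_subset_Ioi.mpr hb)
        fun u hu ↦ by linarith [hψb u hu]⟩
      tendsto_nhdsGT_zero := tendsto_profile_nhdsGT_zero hm
        (continuous_quadraticRate c σ).continuousAt (by simp [quadraticRate]) hω_pos
      tendsto_atTop :=
        tendsto_profile_logScale_atTop hint hψ_atTop (tendsto_quadraticRate_atTop hc σ) }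

theorem integrableOn_profile_comp {φ : ℝ → ℝ} {b : ℝ} (hc : 0 < c) (hm : ContinuousOn m (Ici 0))
    (hφ : InvOn φ (scale m) (Ici 0) (Ici 0)) :
    IntegrableOn (profile m (quadraticRate c σ) ∘ φ) (Ioo 0 b) := by
  have haut := isHalfLineAut_of_invOn_scale hm hφ
  have hφ_pos : ∀ z ∈ Ioo 0 b, 0 < φ z := fun z hz ↦ haut.mapsTo_Ioi hz.1
  have hφ_cont : ContinuousOn φ (Ici 0) := haut.continuousOn
  have hm_cont : ContinuousOn (fun z ↦ m (φ z)) (Ioo 0 b) :=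
    hm.comp (hφ_cont.mono fun z hz ↦ hz.1.le) fun z hz ↦ (hφ_pos z hz).le
  have hint : IntegrableOn (fun z ↦ Real.exp (-(m (φ z))) / √(φ z)) (Ioo 0 b) :=
    integrableOn_deriv_div_sqrt (hφ_cont.mono Icc_subset_Ici_self)
      (fun z hz ↦ hasDerivAt_of_invOn_scale hm hφ hz.1) hφ_pos fun z _ ↦ (Real.exp_pos _).le
  refine (hint.const_mul (√c)⁻¹).mono' ?_ ?_
  · have hω_cont : ContinuousOn (fun z ↦ quadraticRate c σ (φ z)) (Ioo 0 b) :=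
      (continuous_quadraticRate c σ).comp_continuousOn (hφ_cont.mono fun z hz ↦ hz.1.le)
    exact (hm_cont.neg.rexp.div hω_cont.sqrt fun z hz ↦
      (Real.sqrt_pos.mpr (quadraticRate_pos hc σ (hφ_pos z hz))).ne').aestronglyMeasurable
      measurableSet_Ioo
  · refine ae_restrict_of_forall_mem measurableSet_Ioo fun z hz ↦ ?_
    have hω : √(c * φ z) ≤ √(quadraticRate c σ (φ z)) :=
      Real.sqrt_le_sqrt (mul_le_quadraticRate c σ (φ z))
    have hsqrt_pos : 0 < √(c * φ z) := Real.sqrt_pos.mpr (mul_pos hc (hφ_pos z hz))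
    calc ‖profile m (quadraticRate c σ) (φ z)‖
        = Real.exp (-(m (φ z))) / √(quadraticRate c σ (φ z)) :=
          Real.norm_of_nonneg (profile_nonneg _ _ _)
      _ ≤ Real.exp (-(m (φ z))) / √(c * φ z) := by gcongr
      _ = (√c)⁻¹ * (Real.exp (-(m (φ z))) / √(φ z)) := by
          rw [Real.sqrt_mul hc.le, div_mul_eq_div_div_swap, div_eq_inv_mul]

end profile

/-! ### The Laplace exponent near zero -/

/-- The compensated exponential `e^{-ux} - 1 + u x 1_{x < 1}` of the Lévy–Khintchine formula. -/
noncomputable def compensatedExp (u x : ℝ) : ℝ :=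
  Real.exp (-(u * x)) - 1 + if x < 1 then u * x else 0

/-- The Laplace exponent `ψ(u) = -b u + γ² u² + ∫_{(0, ∞)} (e^{-ux} - 1 + u x 1_{x < 1}) μ(dx)`. -/
noncomputable def laplaceExponent (b γ : ℝ) (μ : Measure ℝ) (u : ℝ) : ℝ :=
  -(b * u) + γ ^ 2 * u ^ 2 + ∫ x in Ioi (0 : ℝ), compensatedExp u x ∂μ

section laplaceExponent

variable {μ : Measure ℝ}

theorem measurable_compensatedExp (u : ℝ) : Measurable (compensatedExp u) :=
  (by fun_prop : Measurable fun x ↦ Real.exp (-(u * x)) - 1).add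
    (Measurable.ite measurableSet_Iio (by fun_prop) measurable_const)

theorem continuous_compensatedExp (x : ℝ) : Continuous fun u ↦ compensatedExp u x := by
  unfold compensatedExp
  split_ifs <;> fun_prop

theorem abs_compensatedExp_le {u x : ℝ} (hu : u ∈ Ioc 0 1) (hx : 0 < x) :
    |compensatedExp u x| ≤ min 1 (x ^ 2) := by
  have hux : 0 ≤ u * x := mul_nonneg hu.1.le hx.le
  unfold compensatedExp
  split_ifs with hx1
  · have hux_le : u * x ≤ x := mul_le_of_le_one_left hx.le hu.2
    rw [min_eq_right (pow_le_one₀ hx.le hx1.le)]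
    calc |Real.exp (-(u * x)) - 1 + u * x| = |Real.exp (-(u * x)) - 1 - -(u * x)| := by
          rw [sub_neg_eq_add]
      _ ≤ (-(u * x)) ^ 2 :=
          Real.abs_exp_sub_one_sub_id_le (by rw [abs_neg, abs_of_nonneg hux]; linarith)
      _ ≤ x ^ 2 := by rw [neg_sq]; gcongr
  · rw [min_eq_left (one_le_pow₀ (not_lt.mp hx1)), add_zero, abs_le]
    have := Real.exp_le_one_iff.mpr (neg_nonpos.mpr hux)
    constructor <;> linarith [Real.exp_pos (-(u * x))]

theorem tendsto_laplaceExponent_nhdsGT_zero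
    (hμ : IntegrableOn (fun x ↦ min 1 (x ^ 2)) (Ioi 0) μ) (b γ : ℝ) :
    Tendsto (laplaceExponent b γ μ) (𝓝[>] 0) (𝓝 0) := by
  have hpoly : Tendsto (fun u ↦ -(b * u) + γ ^ 2 * u ^ 2) (𝓝[>] 0) (𝓝 0) := by
    have : Continuous fun u ↦ -(b * u) + γ ^ 2 * u ^ 2 := by fun_prop
    simpa using (this.tendsto 0).mono_left nhdsWithin_le_nhds
  have hzero : ∀ x, compensatedExp 0 x = 0 := by simp [compensatedExp]
  have hint : Tendsto (fun u ↦ ∫ x in Ioi (0 : ℝ), compensatedExp u x ∂μ) (𝓝[>] 0) (𝓝 0) := by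
    have := tendsto_integral_filter_of_dominated_convergence (μ := μ.restrict (Ioi 0))
      (l := 𝓝[>] (0 : ℝ)) (F := compensatedExp) (f := compensatedExp 0) _
      (.of_forall fun u ↦ (measurable_compensatedExp u).aestronglyMeasurable) ?_ hμ
      (.of_forall fun x ↦ ((continuous_compensatedExp x).tendsto 0).mono_left nhdsWithin_le_nhds)
    · simpa only [hzero, integral_zero] using this
    · filter_upwards [Ioc_mem_nhdsGT zero_lt_one] with u hu
      exact ae_restrict_of_forall_mem measurableSet_Ioi fun x hx ↦ abs_compensatedExp_le hu hx
  have := hpoly.add hint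
  rwa [add_zero] at this

theorem eventually_neg_le_laplaceExponent
    (hμ : IntegrableOn (fun x ↦ min 1 (x ^ 2)) (Ioi 0) μ) (b γ : ℝ) {ε : ℝ} (hε : 0 < ε) :
    ∀ᶠ u in 𝓝[>] 0, -ε ≤ laplaceExponent b γ μ u :=
  (tendsto_laplaceExponent_nhdsGT_zero hμ b γ).eventually (le_mem_nhds (neg_lt_zero.mpr hε))

theorem integrableOn_min_one_sq
    (hμ : ∫⁻ x in Ioi (0 : ℝ), ENNReal.ofReal (min 1 (x ^ 2)) ∂μ < ⊤) :
    IntegrableOn (fun x ↦ min 1 (x ^ 2)) (Ioi 0) μ :=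
  (lintegral_ofReal_ne_top_iff_integrable
    (by fun_prop : Measurable fun x : ℝ ↦ min 1 (x ^ 2)).aestronglyMeasurable
    (.of_forall fun x ↦ le_min zero_le_one (sq_nonneg x))).mp hμ.ne

end laplaceExponent

/-- For any λ > 0 there exists a unique non-negative C¹ solution y_λ on (0,∞) of the
Riccati equation y′ = y² − λr² vanishing at ∞. Moreover y_λ is positive on (0,∞),
y_λ(z) ≤ √λ r(z) for z sufficiently small or large, y_λ is integrable at 0, and y_λ
decreases initially and ultimately. -/
theorem stmt_13
    (b γ c σ : ℝ) (μ : Measure ℝ)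
    (hγ : 0 ≤ γ) (hc : 0 < c) (hσ : 0 ≤ σ)
    (hμ0 : μ (Iic 0) = 0)
    (hμ2 : ∫⁻ x in Ioi (0:ℝ), ENNReal.ofReal (min 1 (x ^ 2)) ∂μ < ⊤)
    (hμlog : ∫⁻ x in Ioi (1:ℝ), ENNReal.ofReal (Real.log x) ∂μ < ⊤)
    (ψ ω m I Iinv r : ℝ → ℝ)
    (hψ : ∀ u, ψ u = -(b * u) + γ ^ 2 * u ^ 2 +
      ∫ x in Ioi (0:ℝ), (Real.exp (-(u * x)) - 1 + (if x < 1 then u * x else 0)) ∂μ)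
    (hgen : ∃ ϑ : ℝ, 0 ≤ ϑ ∧ ∀ z, ϑ ≤ z → 0 < ψ z)
    (hω : ∀ z, ω z = c * z + σ ^ 2 * z ^ 2 / 2)
    (hm_int : ∀ lam, 0 ≤ lam → IntervalIntegrable (fun u => ψ u / ω u) volume 0 lam)
    (hm : ∀ lam, m lam = ∫ u in (0:ℝ)..lam, ψ u / ω u)
    (hI : ∀ lam, I lam = ∫ u in (0:ℝ)..lam, Real.exp (m u))
    (hIinv_left : ∀ x, 0 ≤ x → Iinv (I x) = x)
    (hIinv_right : ∀ z, 0 ≤ z → I (Iinv z) = z)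
    (hr : ∀ z, r z = Real.exp (-(m (Iinv z))) / Real.sqrt (ω (Iinv z)))
    (lam : ℝ) (hlam : 0 < lam) :
    ∃ y : ℝ → ℝ,
      ((∀ z ∈ Ioi (0:ℝ), 0 ≤ y z ∧ HasDerivAt y ((y z) ^ 2 - lam * (r z) ^ 2) z) ∧
        Filter.Tendsto y Filter.atTop (nhds 0)) ∧
      (∀ z ∈ Ioi (0:ℝ), 0 < y z) ∧
      (∃ z₁ z₂ : ℝ, 0 < z₁ ∧ z₁ ≤ z₂ ∧
        ∀ z ∈ Ioc (0:ℝ) z₁ ∪ Ici z₂, y z ≤ Real.sqrt lam * r z) ∧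
      IntegrableOn y (Ioo 0 1) volume ∧
      (∃ a : ℝ, 0 < a ∧ AntitoneOn y (Ioc 0 a)) ∧
      (∃ b₀ : ℝ, AntitoneOn y (Ici b₀)) ∧
      (∀ y' : ℝ → ℝ,
        ((∀ z ∈ Ioi (0:ℝ), 0 ≤ y' z ∧ HasDerivAt y' ((y' z) ^ 2 - lam * (r z) ^ 2) z) ∧
          Filter.Tendsto y' Filter.atTop (nhds 0)) →
        EqOn y' y (Ioi 0)) := by
  obtain ⟨ϑ, _, hϑ⟩ := hgen
  obtain rfl : ψ = laplaceExponent b γ μ := funext hψ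
  obtain rfl : ω = quadraticRate c σ := funext hω
  obtain rfl : m = logScale _ _ := funext hm
  obtain rfl : I = scale _ := funext hI
  have hr_comp : r = profile _ _ ∘ Iinv := funext hr
  have hm_cont := continuousOn_logScale hm_int
  have hInv : InvOn Iinv (scale _) (Ici 0) (Ici 0) := ⟨hIinv_left, hIinv_right⟩
  have hψ_zero := eventually_neg_le_laplaceExponent (integrableOn_min_one_sq hμ2) b γ (half_pos hc)
  have hψ_atTop := eventually_atTop.mpr ⟨ϑ, fun u hu ↦ (hϑ u hu).le⟩
  have hr_ends : DecreasingAtEnds r := hr_comp ▸ (decreasingAtEnds_profile hc hm_int hψ_zero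
    hψ_atTop).comp (isHalfLineAut_of_invOn_scale hm_cont hInv)
  have hr_int : IntegrableOn r (Ioo 0 1) := hr_comp ▸ integrableOn_profile_comp hc hm_cont hInv
  have hq := hr_ends.const_mul_sq hlam
  obtain ⟨y, hy, hlim⟩ := hq.exists_isNonnegRiccatiSolOn
  obtain ⟨a, b₀, ha, hab, hle, hanti_a, hanti_b⟩ :=
    hr_ends.exists_le_sqrt_mul_and_antitoneOn hlam hy hlim
  have hint : IntegrableOn y (Ioo 0 1) :=
    integrableOn_Ioo_of_norm_le hy.continuousOn ha (fun z hz ↦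
      (Real.norm_of_nonneg (hy.nonneg z hz.1)).trans_le (hle z (Or.inl hz))) (hr_int.const_mul _)
  exact ⟨y, ⟨(isNonnegRiccatiSolOn_iff_of_isOpen isOpen_Ioi).mp hy, hlim⟩,
    hy.pos isOpen_Ioi hq.pos, ⟨a, b₀, ha, hab, hle⟩, hint, ⟨a, ha, hanti_a⟩, ⟨b₀, hanti_b⟩,
    fun y' ⟨hy', hlim'⟩ ↦
      ((isNonnegRiccatiSolOn_iff_of_isOpen isOpen_Ioi).mpr hy').eqOn_of_tendsto hy hlim' hlim⟩
end

section
/- Fix λ > 0 and let y : (0,∞) → [0,∞) be a C¹ function with y′(z) = y(z)² − λ r(z)² for all z > 0, y(z) → 0 as z → ∞, y integrable on (0,1), and y(z) ≤ √λ · r(z) for all z outside a compact subset of (0,∞). Define Φ(z) := (e^{−m(z)}/ω(z)) · exp{ −∫_0^{I(z)} y(v) dv } · ∫_0^z exp{ m(u) + 2∫_0^{I(u)} y(v) dv } du and h(x) := 1 + λ ∫_0^∞ e^{−xz} Φ(z) dz. Then for every x > 0: (bx − cx²) h′(x) + (γ²x + (σ²/2)x²) h″(x) + x ∫_{(0,∞)}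 ( h(x+z) − h(x) − z h′(x)·1_{z<1} ) μ(dz) = λ h(x). Equivalently, ∫_0^∞ ( xψ(z) + x²ω(z) − λ ) Φ(z) e^{−zx} dz = 1 for every x > 0. -/
open MeasureTheory Set

/-!
The generator maps `x ↦ exp (-x z)` to `x ↦ (x ψ(z) + x² ω(z)) exp (-x z)`, so `1 + lam ℒΦ` is an
eigenfunction as soon as `ℒ((x ψ + x² ω) Φ)(x) = 1 + lam ℒΦ(x)` for the Laplace transform `ℒ`.
Integrating by parts twice, this says that `Φ` solves the adjoint equation
`((ω Φ)' + ψ Φ)' = lam Φ` with `ω Φ → 0` and `(ω Φ)' + ψ Φ → 1` at `0`. Write `q = J'` for the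
function `y` transported by the time change `I`; it solves `q' = q² + (ψ / ω) q - lam / ω`. The
first-order equation `(ω Φ)' + (ψ / ω + q) ω Φ = exp J` then has the explicit solution `Φ`, its
flux `(ω Φ)' + ψ Φ` equals `exp J - q ω Φ`, and differentiating the flux with the Riccati equation
leaves `lam Φ`. The bound on `y` near `0` and `∞` gives `q(z) = O(z ^ (-1/2))` there, hence the
boundary values and a subexponential bound on `Φ`.
-/

section Primitives

open Filter
open scoped Topology

theorem intervalIntegrable_of_continuousOn_Ioi_of_bound {E : Type*} [NormedAddCommGroup E]
    {f : ℝ → E} {a z C : ℝ} (hf : ContinuousOn f (Ioi a)) (hz : a ≤ z)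
    (hC : ∀ u ∈ Ioc a z, ‖f u‖ ≤ C) : IntervalIntegrable f volume a z := by
  rw [intervalIntegrable_iff_integrableOn_Ioc_of_le hz]
  refine IntegrableOn.of_bound (by simp) ?_ C (ae_restrict_of_forall_mem measurableSet_Ioc hC)
  exact (hf.mono Ioc_subset_Ioi_self).aestronglyMeasurable measurableSet_Ioc

theorem intervalIntegrable_of_continuousOn_Ioi_of_integrableOn {E : Type*} [NormedAddCommGroup E]
    {f : ℝ → E} {a b z : ℝ} (hf : ContinuousOn f (Ioi a)) (hab : a < b)
    (hint : IntegrableOn f (Ioo a b)) (hz : a < z) : IntervalIntegrable f volume a z :=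
  ((intervalIntegrable_iff_integrableOn_Ioo_of_le hab.le).2 hint).trans
    (hf.mono (ordConnected_Ioi.uIcc_subset hab hz)).intervalIntegrable

/-- `F` is the primitive of `f` on `(0, ∞)` with initial value `F(0+) = a`. Nothing is
asked on `(-∞, 0]`, and `f` may be singular at `0`. -/
structure IsPrimitive (a : ℝ) (f F : ℝ → ℝ) : Prop where
  hasDerivAt : ∀ z, 0 < z → HasDerivAt F (f z) z
  tendsto_zero : Tendsto F (𝓝[>] 0) (𝓝 a)

namespace IsPrimitive

variable {a u z C : ℝ} {f F g G : ℝ → ℝ}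

theorem of_intervalIntegrable (hf : ContinuousOn f (Ioi 0))
    (hint : ∀ z, 0 < z → IntervalIntegrable f volume 0 z) :
    IsPrimitive 0 f (fun z => ∫ u in (0 : ℝ)..z, f u) where
  hasDerivAt z hz := intervalIntegral.integral_hasDerivAt_right (hint z hz)
    (hf.stronglyMeasurableAtFilter isOpen_Ioi z hz) (hf.continuousAt (Ioi_mem_nhds hz))
  tendsto_zero := by
    have hcont := intervalIntegral.continuousOn_primitive_interval' (hint 1 one_pos) left_mem_uIcc
    have hzero := (hcont 0 left_mem_uIcc).mono (Ioo_subset_Icc_self.trans Icc_subset_uIcc)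
    simpa [ContinuousWithinAt, nhdsWithin_Ioo_eq_nhdsGT one_pos] using hzero

theorem of_bound (hf : ContinuousOn f (Ioi 0))
    (hb : ∀ z, 0 < z → ∃ C, ∀ u ∈ Ioc 0 z, |f u| ≤ C) :
    IsPrimitive 0 f (fun z => ∫ u in (0 : ℝ)..z, f u) :=
  of_intervalIntegrable hf fun z hz =>
    let ⟨_, hC⟩ := hb z hz
    intervalIntegrable_of_continuousOn_Ioi_of_bound hf hz.le hC

theorem integral_exp (hF : ContinuousOn F (Ioi 0))
    (hb : ∀ z, 0 < z → ∃ C, ∀ u ∈ Ioc 0 z, F u ≤ C) :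
    IsPrimitive 0 (fun z => Real.exp (F z)) fun z => ∫ u in (0 : ℝ)..z, Real.exp (F u) :=
  .of_bound (Real.continuous_exp.comp_continuousOn hF) fun z hz =>
    let ⟨C, hC⟩ := hb z hz
    ⟨Real.exp C, fun u hu => by rw [Real.abs_exp]; exact Real.exp_le_exp.2 (hC u hu)⟩

theorem congr (hF : IsPrimitive a f F) (hf : EqOn f g (Ioi 0)) (hFG : EqOn F G (Ioi 0)) :
    IsPrimitive a g G where
  hasDerivAt z hz := hf hz ▸ (hF.hasDerivAt z hz).congr_of_eventuallyEq
    (hFG.symm.eventuallyEq_of_mem (Ioi_mem_nhds hz))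
  tendsto_zero := hF.tendsto_zero.congr' (hFG.eventuallyEq_of_mem self_mem_nhdsWithin)

theorem neg (hF : IsPrimitive a f F) : IsPrimitive (-a) (fun z => -f z) (fun z => -F z) where
  hasDerivAt z hz := (hF.hasDerivAt z hz).fun_neg
  tendsto_zero := hF.tendsto_zero.neg

theorem tendsto_nhdsGT (hF : IsPrimitive 0 f F) (hpos : ∀ z, 0 < z → 0 < F z) :
    Tendsto F (𝓝[>] 0) (𝓝[>] 0) :=
  tendsto_nhdsWithin_iff.2 ⟨hF.tendsto_zero, eventually_mem_nhdsWithin.mono hpos⟩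

theorem comp (hF : IsPrimitive a f F) (hG : IsPrimitive 0 g G) (hpos : ∀ z, 0 < z → 0 < G z) :
    IsPrimitive a (fun z => f (G z) * g z) (fun z => F (G z)) where
  hasDerivAt z hz := (hF.hasDerivAt (G z) (hpos z hz)).comp z (hG.hasDerivAt z hz)
  tendsto_zero := hF.tendsto_zero.comp (hG.tendsto_nhdsGT hpos)

theorem continuousOn (hF : IsPrimitive a f F) : ContinuousOn F (Ioi 0) :=
  fun z hz => (hF.hasDerivAt z hz).continuousAt.continuousWithinAt

theorem sub_le_mul_sub (hF : IsPrimitive a f F) (hu : 0 < u) (huz : u ≤ z)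
    (hC : ∀ t ∈ Ioo u z, f t ≤ C) : F z - F u ≤ C * (z - u) := by
  refine (convex_Icc u z).image_sub_le_mul_sub_of_deriv_le
    (hF.continuousOn.mono fun t ht => hu.trans_le ht.1) (fun t ht => ?_) (fun t ht => ?_)
    u (left_mem_Icc.2 huz) z (right_mem_Icc.2 huz) huz
  all_goals rw [interior_Icc] at ht
  · exact (hF.hasDerivAt t (hu.trans ht.1)).differentiableAt.differentiableWithinAt
  · exact (hF.hasDerivAt t (hu.trans ht.1)).deriv ▸ hC t ht

theorem mul_sub_le_sub (hF : IsPrimitive a f F) (hu : 0 < u) (huz : u ≤ z)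
    (hC : ∀ t ∈ Ioo u z, C ≤ f t) : C * (z - u) ≤ F z - F u := by
  linarith [hF.neg.sub_le_mul_sub hu huz (C := -C) fun t ht => neg_le_neg (hC t ht)]

theorem monotoneOn (hF : IsPrimitive a f F) (hf : ∀ z, 0 < z → 0 ≤ f z) :
    MonotoneOn F (Ioi 0) := fun u hu z _ huz => by
  linarith [hF.mul_sub_le_sub hu huz fun t ht => hf t (lt_trans hu ht.1)]

theorem sub_le_mul (hF : IsPrimitive a f F) (hz : 0 < z) (hC : ∀ t ∈ Ioo 0 z, f t ≤ C) :
    F z - a ≤ C * z := by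
  have hlim : Tendsto (fun u => C * (z - u)) (𝓝[>] 0) (𝓝 (C * (z - 0))) :=
    (Continuous.tendsto (by fun_prop) 0).mono_left nhdsWithin_le_nhds
  rw [sub_zero] at hlim
  refine le_of_tendsto_of_tendsto (hF.tendsto_zero.const_sub (F z)) hlim ?_
  filter_upwards [Ioo_mem_nhdsGT hz] with u hu
  exact hF.sub_le_mul_sub hu.1 hu.2.le fun t ht => hC t ⟨hu.1.trans ht.1, ht.2⟩

theorem mul_le_sub (hF : IsPrimitive a f F) (hz : 0 < z) (hC : ∀ t ∈ Ioo 0 z, C ≤ f t) :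
    C * z ≤ F z - a := by
  linarith [hF.neg.sub_le_mul hz (C := -C) fun t ht => neg_le_neg (hC t ht)]

theorem nonneg (hF : IsPrimitive 0 f F) (hf : ∀ z, 0 < z → 0 ≤ f z) (hz : 0 < z) : 0 ≤ F z := by
  simpa using hF.mul_le_sub hz fun t ht => hf t ht.1

theorem abs_sub_le_mul (hF : IsPrimitive a f F) (hz : 0 < z) (hC : ∀ t ∈ Ioo 0 z, |f t| ≤ C) :
    |F z - a| ≤ C * z :=
  abs_le.2 ⟨by linarith [hF.mul_le_sub hz fun t ht => neg_le_of_abs_le (hC t ht)],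
    hF.sub_le_mul hz fun t ht => le_of_abs_le (hC t ht)⟩

theorem exists_le_add_of_eventually_nonneg (hF : IsPrimitive a f F)
    (hbelow : ∀ z, 0 < z → ∃ K, ∀ u ∈ Ioc 0 z, -K ≤ f u) (hnonneg : ∀ᶠ z in atTop, 0 ≤ f z) :
    ∃ B, ∀ u z, 0 < u → u ≤ z → F u ≤ F z + B := by
  obtain ⟨ϑ, hϑ⟩ := (hnonneg.and (eventually_gt_atTop 0)).exists_forall_of_atTop
  have hϑ0 : 0 < ϑ := (hϑ ϑ le_rfl).2
  obtain ⟨K, hK⟩ := hbelow ϑ hϑ0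
  refine ⟨|K| * ϑ, fun u z hu huz => ?_⟩
  set w := min z (max u ϑ)
  have huw : u ≤ w := le_min huz (le_max_left u ϑ)
  have hwu : w - u ≤ ϑ := by
    have : w ≤ max u ϑ := min_le_right _ _
    have : max u ϑ ≤ u + ϑ := max_le (by linarith) (by linarith)
    linarith
  have hleft : -|K| * (w - u) ≤ F w - F u := by
    refine hF.mul_sub_le_sub hu huw fun t ht => ?_
    have htϑ : t < ϑ := (lt_max_iff.1 (ht.2.trans_le (min_le_right _ _))).resolve_left ht.1.not_gt
    exact (neg_le_neg (le_abs_self K)).trans (hK t ⟨hu.trans ht.1, htϑ.le⟩)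
  have hright : 0 * (z - w) ≤ F z - F w := by
    refine hF.mul_sub_le_sub (hu.trans_le huw) (min_le_left _ _) fun t ht => (hϑ t ?_).1
    exact (le_max_right u ϑ).trans ((min_lt_iff.1 ht.1).resolve_left ht.2.not_gt).le
  nlinarith [mul_le_mul_of_nonneg_left hwu (abs_nonneg K)]

end IsPrimitive

end Primitives

section LaplaceTransform

open Filter Asymptotics Real
open scoped Topology

/-- `g` is measurable on `(0, ∞)` and `O(exp (ε z))` on the whole of `(0, ∞)`, for each `ε > 0`;
this makes the Laplace transform of `g` converge at every positive point. -/
structure IsSubexponential (g : ℝ → ℝ) : Prop where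
  aestronglyMeasurable : AEStronglyMeasurable g (volume.restrict (Ioi 0))
  isBigO : ∀ ε, 0 < ε → g =O[𝓟 (Ioi 0)] fun z => exp (ε * z)

/-- The Laplace transform `∫₀^∞ exp (-x z) g(z) dz`. -/
noncomputable def laplaceTransform (g : ℝ → ℝ) (x : ℝ) : ℝ :=
  ∫ z in Ioi (0 : ℝ), exp (-(x * z)) * g z

namespace IsSubexponential

variable {a x : ℝ} {f g F : ℝ → ℝ}

theorem of_abs_le (hg : AEStronglyMeasurable g (volume.restrict (Ioi 0)))
    (hf : IsSubexponential f) (hgf : ∀ z, 0 < z → |g z| ≤ f z) : IsSubexponential g where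
  aestronglyMeasurable := hg
  isBigO ε hε := (isBigO_principal.2 ⟨1, fun z hz => by
    rw [one_mul]; exact (hgf z hz).trans (le_abs_self _)⟩).trans (hf.isBigO ε hε)

theorem add (hf : IsSubexponential f) (hg : IsSubexponential g) :
    IsSubexponential fun z => f z + g z where
  aestronglyMeasurable := hf.aestronglyMeasurable.add hg.aestronglyMeasurable
  isBigO ε hε := (hf.isBigO ε hε).add (hg.isBigO ε hε)

theorem const_mul (hf : IsSubexponential f) (k : ℝ) : IsSubexponential fun z => k * f z where
  aestronglyMeasurable := hf.aestronglyMeasurable.const_mul k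
  isBigO ε hε := (hf.isBigO ε hε).const_mul_left k

theorem sub (hf : IsSubexponential f) (hg : IsSubexponential g) :
    IsSubexponential fun z => f z - g z := by
  simpa [sub_eq_add_neg] using hf.add (hg.const_mul (-1))

theorem mul (hf : IsSubexponential f) (hg : IsSubexponential g) :
    IsSubexponential fun z => f z * g z where
  aestronglyMeasurable := hf.aestronglyMeasurable.mul hg.aestronglyMeasurable
  isBigO ε hε := by
    simpa only [← exp_add, ← add_mul, add_halves] using
      (hf.isBigO (ε / 2) (half_pos hε)).mul (hg.isBigO (ε / 2) (half_pos hε))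

theorem const (k : ℝ) : IsSubexponential fun _ => k where
  aestronglyMeasurable := aestronglyMeasurable_const
  isBigO ε hε := isBigO_principal.2 ⟨|k|, fun z hz => by
    have : 1 ≤ |exp (ε * z)| := by
      rw [abs_exp]; exact one_le_exp (mul_nonneg hε.le (le_of_lt hz))
    exact le_mul_of_one_le_right (abs_nonneg k) this⟩

theorem id : IsSubexponential fun z => z where
  aestronglyMeasurable := by fun_prop
  isBigO ε hε := isBigO_principal.2 ⟨ε⁻¹, fun z hz => by
    rw [norm_of_nonneg (le_of_lt hz), norm_of_nonneg (exp_pos _).le, inv_mul_eq_div,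
      le_div_iff₀' hε]
    linarith [add_one_le_exp (ε * z)]⟩

theorem integrableOn (hg : IsSubexponential g) (hx : 0 < x) :
    IntegrableOn (fun z => exp (-(x * z)) * g z) (Ioi 0) := by
  obtain ⟨C, hC⟩ := isBigO_principal.1 (hg.isBigO (x / 2) (half_pos hx))
  refine ((exp_neg_integrableOn_Ioi 0 (half_pos hx)).const_mul C).mono'
    (AEStronglyMeasurable.mul (by fun_prop) hg.aestronglyMeasurable)
    (ae_restrict_of_forall_mem measurableSet_Ioi fun z hz => ?_)
  calc ‖exp (-(x * z)) * g z‖ = exp (-(x * z)) * ‖g z‖ := by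
        rw [norm_mul, norm_of_nonneg (exp_pos _).le]
    _ ≤ exp (-(x * z)) * (C * ‖exp (x / 2 * z)‖) := by gcongr; exact hC z hz
    _ = C * exp (-(x / 2) * z) := by
        rw [norm_of_nonneg (exp_pos _).le, mul_left_comm, ← exp_add]; ring_nf

theorem tendsto_exp_neg_mul (hg : IsSubexponential g) (hx : 0 < x) :
    Tendsto (fun z => exp (-(x * z)) * g z) atTop (𝓝 0) := by
  have hO : (fun z => exp (-(x * z)) * g z) =O[atTop] fun z => exp (-(x * z)) * exp (x / 2 * z) :=
    (isBigO_refl _ _).mul ((hg.isBigO (x / 2) (half_pos hx)).mono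
      (le_principal_iff.2 (Ioi_mem_atTop 0)))
  refine hO.trans_tendsto ?_
  have hexp : (fun z => exp (-(x * z)) * exp (x / 2 * z)) = fun z => exp (-(x / 2 * z)) := by
    funext z; rw [← exp_add]; ring_nf
  rw [hexp]
  exact tendsto_exp_neg_atTop_nhds_zero.comp (tendsto_id.const_mul_atTop (half_pos hx))

theorem of_isPrimitive (hf : IsSubexponential f) (hF : IsPrimitive a f F) :
    IsSubexponential F := by
  suffices hsub : IsSubexponential fun z => F z - a by
    simpa using hsub.add (const a)
  refine ⟨(hF.continuousOn.sub continuousOn_const).aestronglyMeasurable measurableSet_Ioi,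
    fun ε hε => ?_⟩
  obtain ⟨C, hC⟩ := isBigO_principal.1 (hf.isBigO (ε / 2) (half_pos hε))
  have hbound : (fun z => F z - a) =O[𝓟 (Ioi 0)] fun z => exp (ε / 2 * z) * z := by
    refine isBigO_principal.2 ⟨|C|, fun z (hz : 0 < z) => ?_⟩
    rw [norm_mul, norm_of_nonneg hz.le, norm_of_nonneg (exp_pos _).le, ← mul_assoc]
    refine hF.abs_sub_le_mul hz fun t ht => (hC t ht.1).trans ?_
    rw [norm_of_nonneg (exp_pos _).le]
    gcongr
    exacts [le_abs_self C, ht.2.le]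
  refine hbound.trans ?_
  simpa only [← exp_add, ← add_mul, add_halves] using
    (isBigO_refl (fun z => exp (ε / 2 * z)) _).mul (id.isBigO (ε / 2) (half_pos hε))

end IsSubexponential

section

variable {a x : ℝ} {f g F : ℝ → ℝ}

theorem laplaceTransform_const_mul (k : ℝ) (g : ℝ → ℝ) (x : ℝ) :
    laplaceTransform (fun z => k * g z) x = k * laplaceTransform g x := by
  simp only [laplaceTransform, mul_left_comm _ k, integral_const_mul]

theorem laplaceTransform_add (hf : IsSubexponential f) (hg : IsSubexponential g) (hx : 0 < x) :
    laplaceTransform (fun z => f z + g z) x = laplaceTransform f x + laplaceTransform g x := by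
  simp only [laplaceTransform, mul_add]
  exact integral_add (hf.integrableOn hx) (hg.integrableOn hx)

theorem laplaceTransform_sub (hf : IsSubexponential f) (hg : IsSubexponential g) (hx : 0 < x) :
    laplaceTransform (fun z => f z - g z) x = laplaceTransform f x - laplaceTransform g x := by
  simp only [laplaceTransform, mul_sub]
  exact integral_sub (hf.integrableOn hx) (hg.integrableOn hx)

theorem laplaceTransform_add_right (g : ℝ → ℝ) (x v : ℝ) :
    laplaceTransform g (x + v) = laplaceTransform (fun z => exp (-(z * v)) * g z) x := by
  simp only [laplaceTransform, ← mul_assoc, ← exp_add]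
  ring_nf

theorem laplaceTransform_of_isPrimitive (hf : IsSubexponential f) (hF : IsPrimitive a f F)
    (hx : 0 < x) : laplaceTransform f x = x * laplaceTransform F x - a := by
  have hFs := hf.of_isPrimitive hF
  have hexp : ∀ z ∈ Ioi (0 : ℝ), HasDerivAt (fun z => exp (-(x * z))) (-x * exp (-(x * z))) z :=
    fun z _ => ((hasDerivAt_id' z).const_mul x).fun_neg.exp.congr_deriv (by ring)
  have hzero : Tendsto (fun z => exp (-(x * z)) * F z) (𝓝[>] 0) (𝓝 (exp (-(x * 0)) * a)) :=
    ((Continuous.tendsto (by fun_prop) 0).mono_left nhdsWithin_le_nhds).mul hF.tendsto_zero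
  have hparts := integral_Ioi_mul_deriv_eq_deriv_mul hexp hF.hasDerivAt (hf.integrableOn hx)
    (((hFs.integrableOn hx).const_mul (-x)).congr (ae_of_all _ fun z => (mul_assoc _ _ _).symm))
    hzero (hFs.tendsto_exp_neg_mul hx)
  simp only [mul_assoc, integral_const_mul, mul_zero, neg_zero, exp_zero, one_mul] at hparts
  rw [laplaceTransform, laplaceTransform, hparts]
  ring

theorem hasDerivAt_laplaceTransform (hg : IsSubexponential g) (hx : 0 < x) :
    HasDerivAt (laplaceTransform g) (-laplaceTransform (fun z => z * g z) x) x := by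
  have hzg := IsSubexponential.id.mul hg
  rw [laplaceTransform, ← integral_neg]
  refine (hasDerivAt_integral_of_dominated_loc_of_deriv_le
    (F := fun t z => exp (-(t * z)) * g z) (F' := fun t z => -(exp (-(t * z)) * (z * g z)))
    (bound := fun z => ‖exp (-(x / 2 * z)) * (z * g z)‖) (Ioi_mem_nhds (half_lt_self hx))
    (.of_forall fun t => AEStronglyMeasurable.mul (by fun_prop) hg.aestronglyMeasurable)
    (hg.integrableOn hx) (hzg.integrableOn hx).neg.aestronglyMeasurable
    (ae_restrict_of_forall_mem measurableSet_Ioi fun z (hz : 0 < z) t (ht : x / 2 < t) => ?_)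
    (hzg.integrableOn (half_pos hx)).norm (.of_forall fun z t _ => ?_)).2
  · simp only [norm_neg, norm_mul, norm_eq_abs, abs_exp]
    gcongr
  · exact (((hasDerivAt_id' t).mul_const z).fun_neg.exp.mul_const (g z)).congr_deriv (by ring)

theorem deriv_deriv_laplaceTransform (hg : IsSubexponential g) (hx : 0 < x) :
    deriv (deriv (laplaceTransform g)) x = laplaceTransform (fun z => z * (z * g z)) x := by
  have hderiv : deriv (laplaceTransform g) =ᶠ[𝓝 x]
      fun t => -laplaceTransform (fun z => z * g z) t :=
    eventually_of_mem (Ioi_mem_nhds hx) fun t ht => (hasDerivAt_laplaceTransform hg ht).deriv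
  rw [hderiv.deriv_eq, (hasDerivAt_laplaceTransform (.mul .id hg) hx).fun_neg.deriv, neg_neg]

end

end LaplaceTransform

section JumpExponent

open Real
open scoped ENNReal

theorem exp_neg_sub_one_add_le_sq {t : ℝ} (ht : 0 ≤ t) : exp (-t) - 1 + t ≤ t ^ 2 := by
  rcases le_total t 1 with h1 | h1
  · have := le_of_abs_le (abs_exp_sub_one_sub_id_le (x := -t) (by rwa [abs_neg, abs_of_nonneg ht]))
    linarith [neg_sq t]
  · nlinarith [exp_le_one_iff.2 (neg_nonpos.2 ht)]

theorem sFinite_of_lintegral_ne_top {α : Type*} [MeasurableSpace α] {ν : Measure α} {f : α → ℝ≥0∞}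
    (hf : Measurable f) (hpos : ∀ᵐ x ∂ν, f x ≠ 0) (hfin : ∫⁻ x, f x ∂ν ≠ ⊤) : SFinite ν := by
  have : IsFiniteMeasure (ν.withDensity f) := isFiniteMeasure_withDensity hfin
  rw [← withDensity_inv_same hf hpos ((ae_lt_top hf hfin).mono fun _ h => h.ne)]
  infer_instance

/-- The compensated exponential `exp (-u v) - 1 + u v 1_{v < 1}` in the Lévy–Khintchine formula of
a spectrally positive process. -/
noncomputable def jumpKernel (u v : ℝ) : ℝ :=
  exp (-(u * v)) - 1 + if v < 1 then u * v else 0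

/-- The contribution `∫ (exp (-u v) - 1 + u v 1_{v < 1}) μ(dv)` of the jumps to a branching
mechanism. -/
noncomputable def jumpExponent (μ : Measure ℝ) (u : ℝ) : ℝ :=
  ∫ v in Ioi (0 : ℝ), jumpKernel u v ∂μ

theorem abs_jumpKernel_le {u v : ℝ} (hu : 0 ≤ u) (hv : 0 < v) :
    |jumpKernel u v| ≤ (u + u ^ 2) * min v (v ^ 2) := by
  have huv : 0 ≤ u * v := by positivity
  unfold jumpKernel
  split_ifs with h
  · rw [min_eq_right (by nlinarith), abs_of_nonneg (by linarith [add_one_le_exp (-(u * v))])]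
    nlinarith [exp_neg_sub_one_add_le_sq huv, mul_nonneg hu (sq_nonneg v)]
  · rw [min_eq_left (by nlinarith),
      abs_of_nonpos (by linarith [exp_le_one_iff.2 (neg_nonpos.2 huv)])]
    nlinarith [add_one_le_exp (-(u * v)), mul_nonneg (sq_nonneg u) hv.le]

theorem measurable_jumpKernel : Measurable fun p : ℝ × ℝ => jumpKernel p.1 p.2 :=
  (by fun_prop : Measurable fun p : ℝ × ℝ => exp (-(p.1 * p.2)) - 1).add
    (.ite (measurableSet_lt measurable_snd measurable_const) (by fun_prop) measurable_const)

theorem continuous_jumpKernel (v : ℝ) : Continuous fun u => jumpKernel u v := by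
  unfold jumpKernel
  split_ifs <;> fun_prop

variable {b γ c σ x : ℝ} {μ : Measure ℝ} {g : ℝ → ℝ}

theorem integrableOn_min_sq (hμ : ∫⁻ v in Ioi (0 : ℝ), ENNReal.ofReal (min v (v ^ 2)) ∂μ < ⊤) :
    IntegrableOn (fun v => min v (v ^ 2)) (Ioi 0) μ := by
  refine ⟨by fun_prop, ?_⟩
  rwa [hasFiniteIntegral_iff_ofReal (ae_restrict_of_forall_mem measurableSet_Ioi
    fun v (hv : 0 < v) => le_min hv.le (sq_nonneg v))]

theorem sFinite_restrict_Ioi_of_min_sq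
    (hμ : ∫⁻ v in Ioi (0 : ℝ), ENNReal.ofReal (min v (v ^ 2)) ∂μ < ⊤) :
    SFinite (μ.restrict (Ioi 0)) :=
  sFinite_of_lintegral_ne_top (f := fun v => ENNReal.ofReal (min v (v ^ 2))) (by fun_prop)
    (ae_restrict_of_forall_mem measurableSet_Ioi fun v (hv : 0 < v) =>
      (ENNReal.ofReal_pos.2 (lt_min hv (by positivity))).ne') hμ.ne

theorem abs_jumpExponent_le {u : ℝ} (hμ : IntegrableOn (fun v => min v (v ^ 2)) (Ioi 0) μ)
    (hu : 0 ≤ u) :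
    |jumpExponent μ u| ≤ (∫ v in Ioi (0 : ℝ), min v (v ^ 2) ∂μ) * (u + u ^ 2) := by
  rw [mul_comm, ← integral_const_mul]
  exact norm_integral_le_of_norm_le (f := jumpKernel u) (hμ.const_mul (u + u ^ 2))
    (ae_restrict_of_forall_mem measurableSet_Ioi fun _ hv => abs_jumpKernel_le hu hv)

theorem continuousOn_jumpExponent (hμ : IntegrableOn (fun v => min v (v ^ 2)) (Ioi 0) μ) :
    ContinuousOn (jumpExponent μ) (Ioi 0) := by
  intro u (hu : 0 < u)
  refine (continuousAt_of_dominated (bound := fun v => (2 * u + (2 * u) ^ 2) * min v (v ^ 2))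
    (.of_forall fun t => (measurable_jumpKernel.comp measurable_prodMk_left).aestronglyMeasurable)
    ?_ (hμ.const_mul _)
    (.of_forall fun v => (continuous_jumpKernel v).continuousAt)).continuousWithinAt
  filter_upwards [Ioo_mem_nhds hu (by linarith : u < 2 * u)] with t ht
  refine ae_restrict_of_forall_mem measurableSet_Ioi fun v (hv : 0 < v) => ?_
  refine (abs_jumpKernel_le ht.1.le hv).trans ?_
  have := ht.1.le
  have := ht.2.le
  gcongr

theorem laplaceTransform_jumpKernel_mul {v : ℝ} (hg : IsSubexponential g) (hx : 0 < x)
    (hv : 0 < v) :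
    laplaceTransform (fun z => jumpKernel z v * g z) x = laplaceTransform g (x + v) -
      laplaceTransform g x - v * deriv (laplaceTransform g) x * if v < 1 then 1 else 0 := by
  have hshift : IsSubexponential fun z => exp (-(z * v)) * g z :=
    .mul (.of_abs_le (f := fun _ => 1) (by fun_prop) (.const 1) fun z hz => by
      rw [abs_exp]; exact exp_le_one_iff.2 (neg_nonpos.2 (mul_pos hz hv).le)) hg
  have hkernel : (fun z => jumpKernel z v * g z) = fun z =>
      (exp (-(z * v)) * g z - g z) + (v * if v < 1 then 1 else 0) * (z * g z) := by
    funext z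
    unfold jumpKernel
    split_ifs <;> ring
  rw [hkernel, laplaceTransform_add (hshift.sub hg) (.const_mul (.mul .id hg) _) hx,
    laplaceTransform_sub hshift hg hx, laplaceTransform_const_mul, ← laplaceTransform_add_right,
    (hasDerivAt_laplaceTransform hg hx).deriv]
  ring

theorem integral_laplaceTransform_jumpKernel_mul
    (hμ : ∫⁻ v in Ioi (0 : ℝ), ENNReal.ofReal (min v (v ^ 2)) ∂μ < ⊤) (hg : IsSubexponential g)
    (hx : 0 < x) :
    ∫ v in Ioi (0 : ℝ), laplaceTransform (fun z => jumpKernel z v * g z) x ∂μ =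
      laplaceTransform (fun z => jumpExponent μ z * g z) x := by
  have := sFinite_restrict_Ioi_of_min_sq hμ
  have hmin := integrableOn_min_sq hμ
  have hpoly : IsSubexponential fun z => (z + z * z) * g z :=
    (IsSubexponential.id.add (.mul .id .id)).mul hg
  have hint : Integrable (Function.uncurry fun v z => exp (-(x * z)) * (jumpKernel z v * g z))
      ((μ.restrict (Ioi 0)).prod (volume.restrict (Ioi 0))) := by
    refine (hmin.mul_prod (hpoly.integrableOn hx).norm).mono' ?_ ?_
    · exact AEStronglyMeasurable.mul (by fun_prop) <|
        (measurable_jumpKernel.comp measurable_swap).aestronglyMeasurable.mul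
          hg.aestronglyMeasurable.comp_snd
    · filter_upwards [Measure.quasiMeasurePreserving_fst.ae (ae_restrict_mem measurableSet_Ioi),
        Measure.quasiMeasurePreserving_snd.ae (ae_restrict_mem measurableSet_Ioi)]
      rintro ⟨v, z⟩ (hv : 0 < v) (hz : 0 < z)
      have hk := abs_jumpKernel_le hz.le hv
      simp only [Function.uncurry, norm_mul, norm_eq_abs, abs_exp]
      rw [abs_of_nonneg (by positivity : 0 ≤ z + z * z)]
      calc exp (-(x * z)) * (|jumpKernel z v| * |g z|)
          ≤ exp (-(x * z)) * ((z + z ^ 2) * min v (v ^ 2) * |g z|) := by gcongr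
        _ = min v (v ^ 2) * (exp (-(x * z)) * ((z + z * z) * |g z|)) := by ring
  simp only [laplaceTransform]
  rw [integral_integral_swap hint]
  simp only [integral_const_mul, integral_mul_const, jumpExponent]

/-- The branching mechanism with drift `b`, diffusion coefficient `γ` and Lévy measure `μ`. -/
noncomputable def branchingMechanism (b γ : ℝ) (μ : Measure ℝ) (u : ℝ) : ℝ :=
  -(b * u) + γ ^ 2 * u ^ 2 + jumpExponent μ u

theorem continuousOn_branchingMechanism
    (hμ : IntegrableOn (fun v => min v (v ^ 2)) (Ioi 0) μ) :
    ContinuousOn (branchingMechanism b γ μ) (Ioi 0) :=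
  ContinuousOn.add (by fun_prop) (continuousOn_jumpExponent hμ)

theorem exists_abs_branchingMechanism_le (b γ : ℝ)
    (hμ : IntegrableOn (fun v => min v (v ^ 2)) (Ioi 0) μ) :
    ∃ K, 0 ≤ K ∧ ∀ u, 0 ≤ u → |branchingMechanism b γ μ u| ≤ K * (u + u ^ 2) := by
  have hK : 0 ≤ ∫ v in Ioi (0 : ℝ), min v (v ^ 2) ∂μ :=
    setIntegral_nonneg measurableSet_Ioi fun v (hv : 0 < v) => le_min hv.le (sq_nonneg v)
  refine ⟨|b| + γ ^ 2 + ∫ v in Ioi (0 : ℝ), min v (v ^ 2) ∂μ, by positivity, fun u hu => ?_⟩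
  have hjump := abs_le.1 (abs_jumpExponent_le hμ hu)
  have hb := abs_le.1 (abs_mul b u).le
  rw [abs_of_nonneg hu] at hb
  unfold branchingMechanism
  refine abs_le.2 ⟨?_, ?_⟩ <;>
    nlinarith [hjump.1, hjump.2, hb.1, hb.2, mul_nonneg (sq_nonneg γ) hu,
      mul_nonneg (sq_nonneg γ) (sq_nonneg u), mul_nonneg (abs_nonneg b) (sq_nonneg u)]

theorem isSubexponential_branchingMechanism (b γ : ℝ)
    (hμ : IntegrableOn (fun v => min v (v ^ 2)) (Ioi 0) μ) :
    IsSubexponential (branchingMechanism b γ μ) := by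
  obtain ⟨K, -, hK⟩ := exists_abs_branchingMechanism_le b γ hμ
  have hpoly : IsSubexponential fun u => K * (u + u * u) :=
    .const_mul (.add .id (.mul .id .id)) K
  refine .of_abs_le ((continuousOn_branchingMechanism hμ).aestronglyMeasurable measurableSet_Ioi)
    hpoly fun u hu => ?_
  simpa only [sq] using hK u hu.le

/-- The generator of the logistic branching process in a Brownian environment: `c` is the strength
of the competition and `σ` the volatility of the environment. -/
noncomputable def logisticGenerator (b γ c σ : ℝ) (μ : Measure ℝ) (f : ℝ → ℝ) (x : ℝ) : ℝ :=
  (b * x - c * x ^ 2) * deriv f x + (γ ^ 2 * x + σ ^ 2 / 2 * x ^ 2) * deriv (deriv f) x +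
    x * ∫ v in Ioi (0 : ℝ), (f (x + v) - f x - v * deriv f x * (if v < 1 then 1 else 0)) ∂μ

theorem logisticGenerator_const_add_const_mul (a k : ℝ) (f : ℝ → ℝ) (x : ℝ) :
    logisticGenerator b γ c σ μ (fun t => a + k * f t) x =
      k * logisticGenerator b γ c σ μ f x := by
  have hjump : ∀ v, a + k * f (x + v) - (a + k * f x) -
      v * (k * deriv f x) * (if v < 1 then 1 else 0) =
      k * (f (x + v) - f x - v * deriv f x * if v < 1 then 1 else 0) := fun v => by ring
  simp only [logisticGenerator, deriv_const_add', deriv_const_mul_field', hjump,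
    integral_const_mul]
  ring

theorem logisticGenerator_laplaceTransform
    (hμ : ∫⁻ v in Ioi (0 : ℝ), ENNReal.ofReal (min v (v ^ 2)) ∂μ < ⊤) (hg : IsSubexponential g)
    (hx : 0 < x) :
    logisticGenerator b γ c σ μ (laplaceTransform g) x = laplaceTransform (fun z =>
      (x * branchingMechanism b γ μ z + x ^ 2 * (c * z + σ ^ 2 * z ^ 2 / 2)) * g z) x := by
  have hzg : IsSubexponential fun z => z * g z := .mul .id hg
  have hzzg : IsSubexponential fun z => z * (z * g z) := .mul .id hzg
  have hjg : IsSubexponential fun z => jumpExponent μ z * g z := by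
    have := isSubexponential_branchingMechanism 0 0 (integrableOn_min_sq hμ)
    simpa [branchingMechanism] using this.mul hg
  have hsplit : (fun z => (x * branchingMechanism b γ μ z +
      x ^ 2 * (c * z + σ ^ 2 * z ^ 2 / 2)) * g z) = fun z =>
      (c * x ^ 2 - b * x) * (z * g z) + (γ ^ 2 * x + σ ^ 2 / 2 * x ^ 2) * (z * (z * g z)) +
        x * (jumpExponent μ z * g z) := by
    funext z
    unfold branchingMechanism
    ring
  have hjump := setIntegral_congr_fun (μ := μ) measurableSet_Ioi fun v (hv : 0 < v) =>
    laplaceTransform_jumpKernel_mul hg hx hv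
  rw [hsplit, laplaceTransform_add (.add (.const_mul hzg _) (.const_mul hzzg _))
      (.const_mul hjg _) hx, laplaceTransform_add (.const_mul hzg _) (.const_mul hzzg _) hx,
    laplaceTransform_const_mul, laplaceTransform_const_mul, laplaceTransform_const_mul,
    ← integral_laplaceTransform_jumpKernel_mul hμ hg hx, hjump, logisticGenerator,
    (hasDerivAt_laplaceTransform hg hx).deriv, deriv_deriv_laplaceTransform hg hx]
  ring

end JumpExponent

section AdjointEquation

open Filter Real
open scoped Topology

/-- `Φ` solves the adjoint equation `((ω Φ)' + ψ Φ)' = lam Φ` on `(0, ∞)`, with `ω Φ → 0` and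
flux `A = (ω Φ)' + ψ Φ → 1` at the origin, and grows subexponentially. -/
structure IsAdjointSolution (lam : ℝ) (ψ ω Φ A : ℝ → ℝ) : Prop where
  isSubexponential : IsSubexponential Φ
  isPrimitive_flux : IsPrimitive 1 (fun z => lam * Φ z) A
  isPrimitive_weight : IsPrimitive 0 (fun z => A z - ψ z * Φ z) fun z => ω z * Φ z

namespace IsAdjointSolution

variable {ψ ω Φ A : ℝ → ℝ} {lam x : ℝ}

theorem isSubexponential_flux (hΦ : IsAdjointSolution lam ψ ω Φ A) : IsSubexponential A :=
  (hΦ.isSubexponential.const_mul lam).of_isPrimitive hΦ.isPrimitive_flux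

theorem isSubexponential_weight (hΦ : IsAdjointSolution lam ψ ω Φ A) (hψ : IsSubexponential ψ) :
    IsSubexponential fun z => ω z * Φ z :=
  (hΦ.isSubexponential_flux.sub (hψ.mul hΦ.isSubexponential)).of_isPrimitive hΦ.isPrimitive_weight

theorem isSubexponential_symbol_mul (hΦ : IsAdjointSolution lam ψ ω Φ A)
    (hψ : IsSubexponential ψ) (x : ℝ) :
    IsSubexponential fun z => (x * ψ z + x ^ 2 * ω z) * Φ z := by
  simpa only [add_mul, mul_assoc] using
    ((hψ.mul hΦ.isSubexponential).const_mul x).add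
      ((hΦ.isSubexponential_weight hψ).const_mul (x ^ 2))

theorem laplaceTransform_symbol_mul (hΦ : IsAdjointSolution lam ψ ω Φ A)
    (hψ : IsSubexponential ψ) (hx : 0 < x) :
    laplaceTransform (fun z => (x * ψ z + x ^ 2 * ω z) * Φ z) x =
      1 + lam * laplaceTransform Φ x := by
  have hψΦ := hψ.mul hΦ.isSubexponential
  have hflux := laplaceTransform_of_isPrimitive (hΦ.isSubexponential.const_mul lam)
    hΦ.isPrimitive_flux hx
  have hweight := laplaceTransform_of_isPrimitive (hΦ.isSubexponential_flux.sub hψΦ)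
    hΦ.isPrimitive_weight hx
  rw [laplaceTransform_const_mul] at hflux
  rw [laplaceTransform_sub hΦ.isSubexponential_flux hψΦ hx] at hweight
  simp only [add_mul, mul_assoc]
  rw [laplaceTransform_add (hψΦ.const_mul x) ((hΦ.isSubexponential_weight hψ).const_mul (x ^ 2)) hx,
    laplaceTransform_const_mul, laplaceTransform_const_mul]
  linear_combination -x * hweight - hflux

theorem laplaceTransform_symbol_sub_mul (hΦ : IsAdjointSolution lam ψ ω Φ A)
    (hψ : IsSubexponential ψ) (hx : 0 < x) :
    laplaceTransform (fun z => (x * ψ z + x ^ 2 * ω z - lam) * Φ z) x = 1 := by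
  simp only [sub_mul]
  rw [laplaceTransform_sub (hΦ.isSubexponential_symbol_mul hψ x)
    (hΦ.isSubexponential.const_mul lam) hx, hΦ.laplaceTransform_symbol_mul hψ hx,
    laplaceTransform_const_mul, add_sub_cancel_right]

end IsAdjointSolution

/-- `q` is a nonnegative solution on `(0, ∞)` of the Riccati equation `q' = q² + p q - lam / ω`
which vanishes at infinity and is `o(1 / z)` at the origin. -/
structure IsRiccatiSolution (lam : ℝ) (p ω q : ℝ → ℝ) : Prop where
  hasDerivAt : ∀ z, 0 < z → HasDerivAt q (q z ^ 2 + p z * q z - lam / ω z) z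
  nonneg : ∀ z, 0 < z → 0 ≤ q z
  tendsto_atTop : Tendsto q atTop (𝓝 0)
  tendsto_mul_zero : Tendsto (fun z => z * q z) (𝓝[>] 0) (𝓝 0)

/-- The product `ω Φ` of the solution `Φ` of the adjoint equation with the coefficient `ω`; in
applications `m' = p`, `J' = q` and `G' = exp (m + 2 J)`. -/
noncomputable def adjointWeight (m J G : ℝ → ℝ) (z : ℝ) : ℝ :=
  exp (-(m z)) * exp (-(J z)) * G z

/-- The flux `(ω Φ)' + ψ Φ` of the solution `Φ` of the adjoint equation, where `ψ = p ω`. -/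
noncomputable def adjointFlux (q m J G : ℝ → ℝ) (z : ℝ) : ℝ :=
  exp (J z) - q z * adjointWeight m J G z

theorem IsSubexponential.exp_of_isPrimitive {a : ℝ} {q J : ℝ → ℝ} (hJ : IsPrimitive a q J)
    (hq : ∀ z, 0 < z → 0 ≤ q z) (hlim : Tendsto q atTop (𝓝 0)) :
    IsSubexponential fun z => exp (J z) where
  aestronglyMeasurable := (continuous_exp.comp_continuousOn
    hJ.continuousOn).aestronglyMeasurable measurableSet_Ioi
  isBigO ε hε := by
    obtain ⟨w, hw⟩ := ((hlim.eventually_le_const hε).and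
      (eventually_gt_atTop 0)).exists_forall_of_atTop
    have hw0 : 0 < w := (hw w le_rfl).2
    refine Asymptotics.isBigO_principal.2 ⟨exp (J w), fun z (hz : 0 < z) => ?_⟩
    rw [norm_of_nonneg (exp_pos _).le, norm_of_nonneg (exp_pos _).le, ← exp_add]
    gcongr
    rcases le_total z w with hzw | hwz
    · linarith [hJ.monotoneOn hq hz hw0 hzw, mul_pos hε hz]
    · nlinarith [hJ.sub_le_mul_sub hw0 hwz fun t ht => (hw t ht.1.le).1, mul_pos hε hw0]

section

variable {lam B c z : ℝ} {p ω q m J G : ℝ → ℝ}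

theorem adjointWeight_nonneg (hG : IsPrimitive 0 (fun z => exp (m z + 2 * J z)) G) (hz : 0 < z) :
    0 ≤ adjointWeight m J G z :=
  mul_nonneg (by positivity) (hG.nonneg (fun _ _ => (exp_pos _).le) hz)

theorem adjointWeight_le (hJ : IsPrimitive 0 q J) (hq : ∀ z, 0 < z → 0 ≤ q z)
    (hG : IsPrimitive 0 (fun z => exp (m z + 2 * J z)) G)
    (hB : ∀ u z, 0 < u → u ≤ z → m u ≤ m z + B) (hz : 0 < z) :
    adjointWeight m J G z ≤ z * (exp B * exp (J z)) := by
  have hGz : G z ≤ exp (m z + B + 2 * J z) * z := by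
    rw [← sub_zero (G z)]
    refine hG.sub_le_mul hz fun u hu => exp_le_exp.2 ?_
    linarith [hB u z hu.1 hu.2.le, hJ.monotoneOn hq hu.1 hz hu.2.le]
  calc adjointWeight m J G z
      ≤ exp (-(m z)) * exp (-(J z)) * (exp (m z + B + 2 * J z) * z) := by
        unfold adjointWeight; gcongr
    _ = z * (exp B * exp (J z)) := by
        rw [← mul_assoc, ← exp_add, ← exp_add, ← exp_add, mul_comm]; ring_nf

theorem isPrimitive_adjointWeight (hm : IsPrimitive 0 p m) (hJ : IsPrimitive 0 q J)
    (hq : ∀ z, 0 < z → 0 ≤ q z) (hG : IsPrimitive 0 (fun z => exp (m z + 2 * J z)) G)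
    (hB : ∀ u z, 0 < u → u ≤ z → m u ≤ m z + B) :
    IsPrimitive 0 (fun z => adjointFlux q m J G z - p z * adjointWeight m J G z)
      (adjointWeight m J G) where
  hasDerivAt z hz := by
    refine (((hm.hasDerivAt z hz).fun_neg.exp.mul (hJ.hasDerivAt z hz).fun_neg.exp).mul
      (hG.hasDerivAt z hz)).congr_deriv ?_
    have hexp : exp (-(m z)) * exp (-(J z)) * exp (m z + 2 * J z) = exp (J z) := by
      rw [← exp_add, ← exp_add]; ring_nf
    simp only [Pi.mul_apply, hexp, adjointFlux, adjointWeight]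
    ring
  tendsto_zero := by
    have hlim : Tendsto (fun z => z * (exp B * exp (J z))) (𝓝[>] 0) (𝓝 0) := by
      simpa using (tendsto_nhdsWithin_of_tendsto_nhds tendsto_id).mul
        ((continuous_exp.tendsto 0 |>.comp hJ.tendsto_zero).const_mul (exp B))
    exact squeeze_zero' (eventually_mem_nhdsWithin.mono fun _ => adjointWeight_nonneg hG)
      (eventually_mem_nhdsWithin.mono fun _ => adjointWeight_le hJ hq hG hB) hlim

theorem isPrimitive_adjointFlux (hm : IsPrimitive 0 p m) (hJ : IsPrimitive 0 q J)
    (hq : IsRiccatiSolution lam p ω q) (hG : IsPrimitive 0 (fun z => exp (m z + 2 * J z)) G)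
    (hB : ∀ u z, 0 < u → u ≤ z → m u ≤ m z + B) :
    IsPrimitive 1 (fun z => lam * (adjointWeight m J G z / ω z)) (adjointFlux q m J G) where
  hasDerivAt z hz := by
    have hweight := (isPrimitive_adjointWeight hm hJ hq.nonneg hG hB).hasDerivAt z hz
    refine ((hJ.hasDerivAt z hz).exp.sub ((hq.hasDerivAt z hz).mul hweight)).congr_deriv ?_
    unfold adjointFlux
    ring
  tendsto_zero := by
    have hexpJ : Tendsto (fun z => exp (J z)) (𝓝[>] 0) (𝓝 1) := by
      simpa [Function.comp_def] using (continuous_exp.tendsto 0).comp hJ.tendsto_zero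
    have hbound : Tendsto (fun z => z * q z * (exp B * exp (J z))) (𝓝[>] 0) (𝓝 0) := by
      simpa using hq.tendsto_mul_zero.mul (hexpJ.const_mul (exp B))
    have hprod : Tendsto (fun z => q z * adjointWeight m J G z) (𝓝[>] 0) (𝓝 0) := by
      refine squeeze_zero' ?_ ?_ hbound <;> filter_upwards [self_mem_nhdsWithin] with z hz
      · exact mul_nonneg (hq.nonneg z hz) (adjointWeight_nonneg hG hz)
      · linarith [mul_le_mul_of_nonneg_left (adjointWeight_le hJ hq.nonneg hG hB hz)
          (hq.nonneg z hz)]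
    rw [← sub_zero (1 : ℝ)]
    exact hexpJ.sub hprod

theorem isSubexponential_adjointWeight_div (hc : 0 < c) (hω : ContinuousOn ω (Ioi 0))
    (hcω : ∀ z, 0 < z → c * z ≤ ω z) (hm : IsPrimitive 0 p m) (hJ : IsPrimitive 0 q J)
    (hq : IsRiccatiSolution lam p ω q) (hG : IsPrimitive 0 (fun z => exp (m z + 2 * J z)) G)
    (hB : ∀ u z, 0 < u → u ≤ z → m u ≤ m z + B) :
    IsSubexponential fun z => adjointWeight m J G z / ω z := by
  have hωpos : ∀ z, 0 < z → 0 < ω z := fun z hz => (mul_pos hc hz).trans_le (hcω z hz)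
  refine .of_abs_le (f := fun z => exp B / c * exp (J z)) ?_
    (.const_mul (.exp_of_isPrimitive hJ hq.nonneg hq.tendsto_atTop) _) fun z hz => ?_
  · exact ((isPrimitive_adjointWeight hm hJ hq.nonneg hG hB).continuousOn.div hω
      fun z hz => (hωpos z hz).ne').aestronglyMeasurable measurableSet_Ioi
  · rw [abs_of_nonneg (div_nonneg (adjointWeight_nonneg hG hz) (hωpos z hz).le)]
    calc adjointWeight m J G z / ω z ≤ z * (exp B * exp (J z)) / (c * z) := by
          gcongr
          exacts [adjointWeight_le hJ hq.nonneg hG hB hz, hcω z hz]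
      _ = exp B / c * exp (J z) := by field_simp

theorem IsRiccatiSolution.isAdjointSolution {ψ : ℝ → ℝ} (hc : 0 < c)
    (hω : ContinuousOn ω (Ioi 0)) (hcω : ∀ z, 0 < z → c * z ≤ ω z)
    (hq : IsRiccatiSolution lam (fun z => ψ z / ω z) ω q)
    (hm : IsPrimitive 0 (fun z => ψ z / ω z) m) (hJ : IsPrimitive 0 q J)
    (hG : IsPrimitive 0 (fun z => exp (m z + 2 * J z)) G)
    (hB : ∀ u z, 0 < u → u ≤ z → m u ≤ m z + B) :
    IsAdjointSolution lam ψ ω (fun z => adjointWeight m J G z / ω z) (adjointFlux q m J G) where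
  isSubexponential := isSubexponential_adjointWeight_div hc hω hcω hm hJ hq hG hB
  isPrimitive_flux := isPrimitive_adjointFlux hm hJ hq hG hB
  isPrimitive_weight := by
    have hω0 : ∀ z ∈ Ioi (0 : ℝ), ω z ≠ 0 := fun z hz =>
      ((mul_pos hc hz).trans_le (hcω z hz)).ne'
    refine (isPrimitive_adjointWeight hm hJ hq.nonneg hG hB).congr (fun z _ => ?_)
      fun z hz => ?_
    · ring
    · rw [mul_div_cancel₀ _ (hω0 z hz)]

end

end AdjointEquation

section TimeChange

open Filter Real
open scoped Topology

/-- The function `y` after the time change `I`, where `I' = exp m`: the pull-back of the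
differential form `y dz` along `I`. -/
noncomputable def timeChange (y m I : ℝ → ℝ) (z : ℝ) : ℝ :=
  y (I z) * exp (m z)

variable {lam B c z : ℝ} {p ω m I y r : ℝ → ℝ}

theorem exp_neg_mul_le_of_le_add (hm : IsPrimitive 0 p m)
    (hI : IsPrimitive 0 (fun z => exp (m z)) I)
    (hB : ∀ u z, 0 < u → u ≤ z → m u ≤ m z + B) (hz : 0 < z) : exp (-B) * z ≤ I z := by
  have hbelow : ∀ w, 0 < w → -B ≤ m w := fun w hw => by
    have := le_of_tendsto hm.tendsto_zero
      (eventually_of_mem (Ioo_mem_nhdsGT hw) fun u hu => hB u w hu.1 hu.2.le)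
    linarith
  simpa using hI.mul_le_sub hz fun t ht => exp_le_exp.2 (hbelow t ht.1)

theorem sq_mul_exp_sq_eq_inv (hω : 0 < ω z) (hr : r (I z) = exp (-(m z)) / √(ω z)) :
    r (I z) ^ 2 * exp (m z) ^ 2 = (ω z)⁻¹ := by
  rw [hr, div_pow, sq_sqrt hω.le, div_mul_eq_mul_div, ← mul_pow, ← exp_add, neg_add_cancel,
    exp_zero, one_pow, one_div]

theorem hasDerivAt_timeChange (hm : IsPrimitive 0 p m)
    (hI : IsPrimitive 0 (fun z => exp (m z)) I) (hz : 0 < z) (hω : 0 < ω z)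
    (hr : r (I z) = exp (-(m z)) / √(ω z))
    (hy : HasDerivAt y (y (I z) ^ 2 - lam * r (I z) ^ 2) (I z)) :
    HasDerivAt (timeChange y m I)
      (timeChange y m I z ^ 2 + p z * timeChange y m I z - lam / ω z) z := by
  refine ((hy.comp z (hI.hasDerivAt z hz)).mul (hm.hasDerivAt z hz).exp).congr_deriv ?_
  simp only [Function.comp_apply, timeChange]
  linear_combination (-lam) * sq_mul_exp_sq_eq_inv hω hr

theorem timeChange_le (hlam : 0 ≤ lam) (hc : 0 < c) (hcω : c * z ≤ ω z) (hz : 0 < z)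
    (hr : r (I z) = exp (-(m z)) / √(ω z)) (hy : y (I z) ^ 2 ≤ lam * r (I z) ^ 2) :
    timeChange y m I z ≤ √(lam / (c * z)) := by
  refine le_sqrt_of_sq_le ?_
  calc timeChange y m I z ^ 2 ≤ lam * r (I z) ^ 2 * exp (m z) ^ 2 := by
        unfold timeChange; rw [mul_pow]; gcongr
    _ = lam / ω z := by
        rw [mul_assoc, sq_mul_exp_sq_eq_inv ((mul_pos hc hz).trans_le hcω) hr, div_eq_mul_inv]
    _ ≤ lam / (c * z) := by gcongr

theorem isRiccatiSolution_timeChange (hlam : 0 ≤ lam) (hc : 0 < c) (hcω : ∀ z, 0 < z → c * z ≤ ω z)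
    (hm : IsPrimitive 0 p m) (hI : IsPrimitive 0 (fun z => exp (m z)) I)
    (hB : ∀ u z, 0 < u → u ≤ z → m u ≤ m z + B)
    (hr : ∀ z, 0 < z → r (I z) = exp (-(m z)) / √(ω z))
    (hy : ∀ z, 0 < z → 0 ≤ y z ∧ HasDerivAt y (y z ^ 2 - lam * r z ^ 2) z)
    (hzero : ∀ᶠ z in 𝓝[>] 0, y z ^ 2 ≤ lam * r z ^ 2)
    (htop : ∀ᶠ z in atTop, y z ^ 2 ≤ lam * r z ^ 2) :
    IsRiccatiSolution lam p ω (timeChange y m I) := by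
  have hIpos : ∀ z, 0 < z → 0 < I z := fun z hz =>
    (by positivity : 0 < exp (-B) * z).trans_le (exp_neg_mul_le_of_le_add hm hI hB hz)
  have hnonneg : ∀ z, 0 < z → 0 ≤ timeChange y m I z := fun z hz =>
    mul_nonneg (hy _ (hIpos z hz)).1 (exp_pos _).le
  refine ⟨fun z hz => hasDerivAt_timeChange hm hI hz ((mul_pos hc hz).trans_le (hcω z hz))
    (hr z hz) (hy _ (hIpos z hz)).2, hnonneg, ?_, ?_⟩
  · have hItop : Tendsto I atTop atTop :=
      tendsto_atTop_mono' _ ((eventually_gt_atTop 0).mono fun _ =>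
        exp_neg_mul_le_of_le_add hm hI hB) (tendsto_id.const_mul_atTop (exp_pos (-B)))
    have hlim : Tendsto (fun z => √(lam / (c * z))) atTop (𝓝 0) := by
      simpa [Function.comp_def] using (continuous_sqrt.tendsto 0).comp
        ((tendsto_id.const_mul_atTop hc).const_div_atTop lam)
    refine squeeze_zero' ((eventually_gt_atTop 0).mono hnonneg) ?_ hlim
    filter_upwards [eventually_gt_atTop 0, hItop.eventually htop] with z hz hyz
    exact timeChange_le hlam hc (hcω z hz) hz (hr z hz) hyz
  · have hlim : Tendsto (fun z => √(lam / c * z)) (𝓝[>] 0) (𝓝 0) :=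
      ((Continuous.tendsto' (by fun_prop) 0 0 (by simp)).mono_left nhdsWithin_le_nhds)
    refine squeeze_zero' (eventually_mem_nhdsWithin.mono fun z hz =>
      mul_nonneg (le_of_lt hz) (hnonneg z hz)) ?_ hlim
    filter_upwards [self_mem_nhdsWithin, (hI.tendsto_nhdsGT hIpos).eventually hzero]
      with z (hz : 0 < z) hyz
    calc z * timeChange y m I z ≤ z * √(lam / (c * z)) := by
          gcongr; exact timeChange_le hlam hc (hcω z hz) hz (hr z hz) hyz
      _ = √(lam / c * z) := by
          rw [← sqrt_sq hz.le, ← sqrt_mul (sq_nonneg z), sqrt_sq hz.le]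
          congr 1
          field_simp

end TimeChange

section IntegralFormulas

open Filter Real
open scoped Topology

theorem abs_div_le_of_quadratic {K c u s t : ℝ} (hc : 0 < c) (hu : 0 < u)
    (hs : |s| ≤ K * (u + u ^ 2)) (ht : c * u ≤ t) : |s / t| ≤ K / c * (1 + u) := by
  have hcu := mul_pos hc hu
  rw [abs_div, abs_of_pos (hcu.trans_le ht)]
  calc |s| / t ≤ K * (u + u ^ 2) / (c * u) :=
        div_le_div₀ ((abs_nonneg s).trans hs) hs hcu ht
    _ = K / c * (1 + u) := by field_simp

variable {B K c lam : ℝ} {ψ ω m I y r : ℝ → ℝ}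

theorem isPrimitive_integral_div_of_quadratic (hc : 0 < c) (hω : ContinuousOn ω (Ioi 0))
    (hcω : ∀ z, 0 < z → c * z ≤ ω z) (hψ : ContinuousOn ψ (Ioi 0)) (hK : 0 ≤ K)
    (hψK : ∀ u, 0 < u → |ψ u| ≤ K * (u + u ^ 2)) (hψ_nonneg : ∀ᶠ z in atTop, 0 ≤ ψ z)
    (hm : ∀ z, m z = ∫ u in (0 : ℝ)..z, ψ u / ω u) :
    IsPrimitive 0 (fun z => ψ z / ω z) m ∧ ∃ B, ∀ u z, 0 < u → u ≤ z → m u ≤ m z + B := by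
  have hωpos : ∀ z, 0 < z → 0 < ω z := fun z hz => (mul_pos hc hz).trans_le (hcω z hz)
  have hbound : ∀ z, 0 < z → ∃ C, ∀ u ∈ Ioc 0 z, |ψ u / ω u| ≤ C := fun z _ =>
    ⟨K / c * (1 + z), fun u hu => (abs_div_le_of_quadratic hc hu.1 (hψK u hu.1)
      (hcω u hu.1)).trans (by gcongr; exact hu.2)⟩
  have hprim : IsPrimitive 0 (fun z => ψ z / ω z) m := funext hm ▸
    .of_bound (hψ.div hω fun z hz => (hωpos z hz).ne') hbound
  refine ⟨hprim, hprim.exists_le_add_of_eventually_nonneg (fun z hz => ?_) ?_⟩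
  · obtain ⟨C, hC⟩ := hbound z hz
    exact ⟨C, fun u hu => neg_le_of_abs_le (hC u hu)⟩
  · filter_upwards [hψ_nonneg, eventually_gt_atTop 0] with z hψz hz
    exact div_nonneg hψz (hωpos z hz).le

/-- The explicit solution `Φ` of the adjoint equation, where `J' = q` for a solution `q` of the
associated Riccati equation. -/
noncomputable def adjointSolution (ω m J : ℝ → ℝ) (z : ℝ) : ℝ :=
  exp (-(m z)) / ω z * exp (-(J z)) * ∫ u in (0 : ℝ)..z, exp (m u + 2 * J u)

theorem exists_isAdjointSolution_of_isPrimitive (hlam : 0 ≤ lam) (hc : 0 < c)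
    (hω : ContinuousOn ω (Ioi 0)) (hcω : ∀ z, 0 < z → c * z ≤ ω z)
    (hm : IsPrimitive 0 (fun z => ψ z / ω z) m) (hB : ∀ u z, 0 < u → u ≤ z → m u ≤ m z + B)
    (hI : IsPrimitive 0 (fun z => exp (m z)) I)
    (hr : ∀ z, 0 < z → r (I z) = exp (-(m z)) / √(ω z))
    (hy : ∀ z, 0 < z → 0 ≤ y z ∧ HasDerivAt y (y z ^ 2 - lam * r z ^ 2) z)
    (hy_int : IntegrableOn y (Ioo 0 1)) (hzero : ∀ᶠ z in 𝓝[>] 0, y z ^ 2 ≤ lam * r z ^ 2)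
    (htop : ∀ᶠ z in atTop, y z ^ 2 ≤ lam * r z ^ 2) :
    ∃ A, IsAdjointSolution lam ψ ω (adjointSolution ω m fun z => ∫ v in (0 : ℝ)..I z, y v) A := by
  have hIpos : ∀ z, 0 < z → 0 < I z := fun z hz =>
    (by positivity : 0 < exp (-B) * z).trans_le (exp_neg_mul_le_of_le_add hm hI hB hz)
  have hq := isRiccatiSolution_timeChange hlam hc hcω hm hI hB hr hy hzero htop
  have hycont : ContinuousOn y (Ioi 0) := fun z hz => (hy z hz).2.continuousAt.continuousWithinAt
  have hJ : IsPrimitive 0 (timeChange y m I) fun z => ∫ v in (0 : ℝ)..I z, y v :=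
    (IsPrimitive.of_intervalIntegrable hycont fun z hz =>
      intervalIntegrable_of_continuousOn_Ioi_of_integrableOn hycont one_pos hy_int hz).comp hI hIpos
  have hG := IsPrimitive.integral_exp (hm.continuousOn.fun_add (hJ.continuousOn.const_mul 2))
    fun z hz => ⟨m z + B + _, fun u hu => add_le_add (hB u z hu.1 hu.2)
      (mul_le_mul_of_nonneg_left (hJ.monotoneOn hq.nonneg hu.1 hz hu.2) two_pos.le)⟩
  have hΦ := hq.isAdjointSolution hc hω hcω hm hJ hG hB
  simp only [adjointWeight, mul_div_right_comm] at hΦ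
  exact ⟨_, hΦ⟩

theorem eventually_and_eventually_of_isCompact {K : Set ℝ} {P : ℝ → Prop} (hK : IsCompact K)
    (hK0 : K ⊆ Ioi 0) (hP : ∀ z ∈ Ioi (0 : ℝ) \ K, P z) :
    (∀ᶠ z in 𝓝[>] 0, P z) ∧ ∀ᶠ z in atTop, P z := by
  constructor
  · have hcompl : Kᶜ ∈ 𝓝 (0 : ℝ) :=
      hK.isClosed.compl_mem_nhds fun h => lt_irrefl 0 (mem_Ioi.1 (hK0 h))
    filter_upwards [self_mem_nhdsWithin, nhdsWithin_le_nhds hcompl] with z hz hzK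
    exact hP z ⟨hz, hzK⟩
  · filter_upwards [eventually_gt_atTop 0, atTop_le_cocompact hK.compl_mem_cocompact] with z hz hzK
    exact hP z ⟨hz, hzK⟩

theorem exists_isAdjointSolution (hlam : 0 ≤ lam) (hc : 0 < c) (hω : ContinuousOn ω (Ioi 0))
    (hcω : ∀ z, 0 < z → c * z ≤ ω z) (hψ : ContinuousOn ψ (Ioi 0)) (hK : 0 ≤ K)
    (hψK : ∀ u, 0 < u → |ψ u| ≤ K * (u + u ^ 2)) (hψ_nonneg : ∀ᶠ z in atTop, 0 ≤ ψ z)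
    (hm : ∀ z, m z = ∫ u in (0 : ℝ)..z, ψ u / ω u) (hI : ∀ z, I z = ∫ u in (0 : ℝ)..z, exp (m u))
    (hr : ∀ z, 0 < z → r (I z) = exp (-(m z)) / √(ω z))
    (hy : ∀ z, 0 < z → 0 ≤ y z ∧ HasDerivAt y (y z ^ 2 - lam * r z ^ 2) z)
    (hy_int : IntegrableOn y (Ioo 0 1)) {S : Set ℝ} (hS : IsCompact S) (hS_pos : S ⊆ Ioi 0)
    (hy_le : ∀ z ∈ Ioi 0 \ S, y z ≤ √lam * r z) :
    ∃ A, IsAdjointSolution lam ψ ω (adjointSolution ω m fun z => ∫ v in (0 : ℝ)..I z, y v) A := by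
  obtain ⟨hm', B, hB⟩ :=
    isPrimitive_integral_div_of_quadratic hc hω hcω hψ hK hψK hψ_nonneg hm
  have hI' : IsPrimitive 0 (fun z => exp (m z)) I := funext hI ▸
    .integral_exp hm'.continuousOn fun z _ => ⟨m z + B, fun u hu => hB u z hu.1 hu.2⟩
  have hy_sq : ∀ z ∈ Ioi 0 \ S, y z ^ 2 ≤ lam * r z ^ 2 := fun z hz => by
    simpa only [mul_pow, sq_sqrt hlam] using pow_le_pow_left₀ (hy z hz.1).1 (hy_le z hz) 2
  obtain ⟨hzero, htop⟩ := eventually_and_eventually_of_isCompact hS hS_pos hy_sq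
  exact exists_isAdjointSolution_of_isPrimitive hlam hc hω hcω hm' hB hI' hr hy hy_int hzero htop

end IntegralFormulas

theorem stmt_18_general (b γ c σ : ℝ) (μ : Measure ℝ) (hc : 0 < c)
    (hμ2 : ∫⁻ x in Ioi (0 : ℝ), ENNReal.ofReal (min x (x ^ 2)) ∂μ < ⊤)
    (ψ ω m I Iinv r : ℝ → ℝ)
    (hψ : ∀ u, ψ u = -(b * u) + γ ^ 2 * u ^ 2 +
      ∫ x in Ioi (0 : ℝ), (Real.exp (-(u * x)) - 1 + (if x < 1 then u * x else 0)) ∂μ)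
    (hgen : ∃ ϑ : ℝ, 0 ≤ ϑ ∧ ∀ z, ϑ ≤ z → 0 < ψ z)
    (hω : ∀ z, ω z = c * z + σ ^ 2 * z ^ 2 / 2)
    (hm : ∀ lam, m lam = ∫ u in (0 : ℝ)..lam, ψ u / ω u)
    (hI : ∀ lam, I lam = ∫ u in (0 : ℝ)..lam, Real.exp (m u))
    (hIinv : ∀ x, 0 ≤ x → Iinv (I x) = x)
    (hr : ∀ z, r z = Real.exp (-(m (Iinv z))) / Real.sqrt (ω (Iinv z)))
    (lam : ℝ) (hlam : 0 ≤ lam) (y : ℝ → ℝ)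
    (hy : ∀ z ∈ Ioi (0 : ℝ), 0 ≤ y z ∧ HasDerivAt y ((y z) ^ 2 - lam * (r z) ^ 2) z)
    (hyint : IntegrableOn y (Ioo 0 1) volume)
    (hybound : ∃ Kc : Set ℝ, IsCompact Kc ∧ Kc ⊆ Ioi 0 ∧
      ∀ z ∈ Ioi (0 : ℝ) \ Kc, y z ≤ Real.sqrt lam * r z)
    (Φ h : ℝ → ℝ)
    (hΦ : ∀ z, Φ z = (Real.exp (-(m z)) / ω z) *
      Real.exp (-(∫ v in (0 : ℝ)..(I z), y v)) *
      (∫ u in (0 : ℝ)..z, Real.exp (m u + 2 * ∫ v in (0 : ℝ)..(I u), y v)))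
    (hh : ∀ x, h x = 1 + lam * ∫ z in Ioi (0 : ℝ), Real.exp (-(x * z)) * Φ z)
    (x : ℝ) (hx : 0 < x) :
    ((b * x - c * x ^ 2) * deriv h x +
        (γ ^ 2 * x + σ ^ 2 / 2 * x ^ 2) * deriv (deriv h) x +
        x * ∫ z in Ioi (0 : ℝ),
          (h (x + z) - h x - z * deriv h x * (if z < 1 then 1 else 0)) ∂μ
        = lam * h x) ∧
      (∫ z in Ioi (0 : ℝ), (x * ψ z + x ^ 2 * ω z - lam) * Φ z * Real.exp (-(z * x))) = 1 := by
  obtain rfl : ψ = branchingMechanism b γ μ := funext hψ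
  obtain rfl : ω = fun z => c * z + σ ^ 2 * z ^ 2 / 2 := funext hω
  obtain rfl : Φ = adjointSolution _ m fun z => ∫ v in (0 : ℝ)..I z, y v := funext hΦ
  obtain rfl : h = fun x => 1 + lam * laplaceTransform _ x := funext hh
  set Φ := adjointSolution _ m _
  obtain ⟨ϑ, -, hϑ⟩ := hgen
  obtain ⟨Kc, hKc, hKc_pos, hy_le⟩ := hybound
  have hmin := integrableOn_min_sq hμ2
  obtain ⟨K, hK, hψK⟩ := exists_abs_branchingMechanism_le b γ hmin
  obtain ⟨A, hA⟩ : ∃ A, IsAdjointSolution lam (branchingMechanism b γ μ) _ Φ A :=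
    exists_isAdjointSolution hlam hc (by fun_prop)
      (fun z _ => le_add_of_nonneg_right (by positivity)) (continuousOn_branchingMechanism hmin)
      hK (fun u hu => hψK u hu.le) (Filter.eventually_atTop.2 ⟨ϑ, fun z hz => (hϑ z hz).le⟩)
      hm hI (fun z hz => by rw [hr, hIinv z hz.le]) hy hyint hKc hKc_pos hy_le
  have hψs := isSubexponential_branchingMechanism b γ hmin
  constructor
  · change logisticGenerator b γ c σ μ (fun x => 1 + lam * laplaceTransform Φ x) x = _
    rw [logisticGenerator_const_add_const_mul,
      logisticGenerator_laplaceTransform hμ2 hA.isSubexponential hx,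
      hA.laplaceTransform_symbol_mul hψs hx]
  · rw [← hA.laplaceTransform_symbol_sub_mul hψs hx, laplaceTransform]
    simp only [mul_comm]

/-- With y, Φ, h as in the paper, for every x > 0 the function h satisfies the eigenvalue
equation 𝒰h(x) = λh(x) for the generator 𝒰 of the logistic CB-process in a Brownian random
environment; equivalently ∫_0^∞ (xψ(z) + x²ω(z) − λ)Φ(z)e^{−zx} dz = 1. -/
theorem stmt_18
    (b γ c σ : ℝ) (μ : Measure ℝ)
    (hγ : 0 ≤ γ) (hc : 0 < c) (hσ : 0 < σ)
    (hμ0 : μ (Iic 0) = 0)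
    (hμ2 : ∫⁻ x in Ioi (0:ℝ), ENNReal.ofReal (min x (x ^ 2)) ∂μ < ⊤)
    (hμlog : ∫⁻ x in Ioi (1:ℝ), ENNReal.ofReal (Real.log x) ∂μ < ⊤)
    (ψ ω m I Iinv r : ℝ → ℝ)
    (hψ : ∀ u, ψ u = -(b * u) + γ ^ 2 * u ^ 2 +
      ∫ x in Ioi (0:ℝ), (Real.exp (-(u * x)) - 1 + (if x < 1 then u * x else 0)) ∂μ)
    (hgen : ∃ ϑ : ℝ, 0 ≤ ϑ ∧ ∀ z, ϑ ≤ z → 0 < ψ z)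
    (hω : ∀ z, ω z = c * z + σ ^ 2 * z ^ 2 / 2)
    (hm : ∀ lam, m lam = ∫ u in (0:ℝ)..lam, ψ u / ω u)
    (hI : ∀ lam, I lam = ∫ u in (0:ℝ)..lam, Real.exp (m u))
    (hIinv_left : ∀ x, 0 ≤ x → Iinv (I x) = x)
    (hIinv_right : ∀ z, 0 ≤ z → I (Iinv z) = z)
    (hr : ∀ z, r z = Real.exp (-(m (Iinv z))) / Real.sqrt (ω (Iinv z)))
    (lam : ℝ) (hlam : 0 < lam)
    (y : ℝ → ℝ)
    (hy : ∀ z ∈ Ioi (0:ℝ), 0 ≤ y z ∧ HasDerivAt y ((y z) ^ 2 - lam * (r z) ^ 2) z)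
    (hy0 : Filter.Tendsto y Filter.atTop (nhds 0))
    (hyint : IntegrableOn y (Ioo 0 1) volume)
    (hybound : ∃ Kc : Set ℝ, IsCompact Kc ∧ Kc ⊆ Ioi 0 ∧
      ∀ z ∈ Ioi (0:ℝ) \ Kc, y z ≤ Real.sqrt lam * r z)
    (Φ h : ℝ → ℝ)
    (hΦ : ∀ z, Φ z = (Real.exp (-(m z)) / ω z) *
      Real.exp (-(∫ v in (0:ℝ)..(I z), y v)) *
      (∫ u in (0:ℝ)..z, Real.exp (m u + 2 * ∫ v in (0:ℝ)..(I u), y v)))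
    (hh : ∀ x, h x = 1 + lam * ∫ z in Ioi (0:ℝ), Real.exp (-(x * z)) * Φ z) :
    ∀ x : ℝ, 0 < x →
      ((b * x - c * x ^ 2) * deriv h x +
        (γ ^ 2 * x + σ ^ 2 / 2 * x ^ 2) * deriv (deriv h) x +
        x * ∫ z in Ioi (0:ℝ),
          (h (x + z) - h x - z * deriv h x * (if z < 1 then 1 else 0)) ∂μ
        = lam * h x) ∧
      (∫ z in Ioi (0:ℝ), (x * ψ z + x ^ 2 * ω z - lam) * Φ z * Real.exp (-(z * x))) = 1 := by
  exact fun x hx => stmt_18_general b γ c σ μ hc hμ2 ψ ω m I Iinv r hψ hgen hω hm hI hIinv_left hr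
    lam hlam.le y hy hyint hybound Φ h hΦ hh x hx
end
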